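/- arXiv:2202.06759 — 2 statements merged into one kernel-verified Lean document; each statement's English description precedes it below -/
import Mathlib

section
/- For every ε > 0 there exists a constant C(ε) > 0 with the following property: let p be an odd prime, n ≥ 1 an integer, q := pⁿ, β₁, β₂, β₃ integers coprime to p, and M a real number with 1 ≤ M ≤ q^{1/2−ε}. Let Q, R be positive integers, and suppose that for i = 1, 2 there are γ_i ∈ ℤ with γ_iβ₃ ≡ β_i (mod q), integers a_i and positive integers r_i ≤ R with gcd(a_i,r_i) = 1 and |γ_i/q − a_i/r_i| ≤ 1/(r_iQ). Then Σ_{β₁,β₂,β₃}(M,q) ≤ C(ε) · (R²M³/q + RM³/Q + M) · (RMq)^ε. -/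
/-- `Σ_{β₁,β₂,β₃}(M,q)`: the number of triples `(x₁,x₂,x₃) ∈ ℤ³` with
`|x₁|,|x₂|,|x₃| ≤ M`, `p ∤ x₁x₂x₃` and `β₁x₁² + β₂x₂² + β₃x₃² ≡ 0 (mod q)`. -/
noncomputable def sigmaCount (p : ℕ) (β₁ β₂ β₃ : ℤ) (M : ℝ) (q : ℕ) : ℕ :=
  Nat.card {x : ℤ × ℤ × ℤ |
    ((|x.1| : ℤ) : ℝ) ≤ M ∧ ((|x.2.1| : ℤ) : ℝ) ≤ M ∧ ((|x.2.2| : ℤ) : ℝ) ≤ M ∧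
    ¬ (p : ℤ) ∣ x.1 * x.2.1 * x.2.2 ∧
    (q : ℤ) ∣ β₁ * x.1 ^ 2 + β₂ * x.2.1 ^ 2 + β₃ * x.2.2 ^ 2}

/-!
Write `b_i = γ_i r_i - a_i q`, so that `|b_i| ≤ q / Q`. Multiplying the congruence
`γ₁x₁² + γ₂x₂² + x₃² ≡ 0 (mod q)` by `r₁r₂` turns it into the divisibility by `q` of the integral
form `r₂b₁x₁² + r₁(b₂x₂² + r₂x₃²)`, whose coefficients are small, so that it takes only
`O(1 + R²M²/q + RM²/Q)` values. If some `b_i` vanishes, then `q ∣ r_i`, hence `q ≤ R` and the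
trivial bound `O(M³)` is enough. Otherwise fix the value of the form and `x₁`: what remains is the
number of representations of an integer `N` by a binary form, which is `O(T^ε)` with a uniform
constant when coefficients and variables are at most `T`.

Completing the square reduces that last bound to elements of norm `N` in `ℤ√D` with `D` squarefree.
The primitive ones are sorted by the gcd of `N` with the imaginary part of `w * star u`, for one
fixed `u`; the divisor bound controls the number of classes. Within a class the ratios
`2 * w / z` lie in `ℤ√D` and have norm `4`, and solutions of this Pell equation grow geometrically.
-/

open Finset

/-! ### The divisor bound -/

theorem natCast_add_one_le_mul_one_add_pow {δ : ℝ} (hδ : 0 < δ) (a : ℕ) :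
    (a + 1 : ℝ) ≤ (1 + δ⁻¹) * (1 + δ) ^ a :=
  calc (a + 1 : ℝ) ≤ a + 1 + (a * δ + δ⁻¹) := le_add_of_nonneg_right (by positivity)
    _ = (1 + δ⁻¹) * (1 + a * δ) := by field_simp; ring
    _ ≤ (1 + δ⁻¹) * (1 + δ) ^ a := by gcongr; exact one_add_mul_le_pow (by linarith) a

theorem natCast_add_one_le_mul_rpow_pow {ε : ℝ} (hε : 0 < ε) {m : ℕ} (hm : 2 ≤ m) (a : ℕ) :
    (a + 1 : ℝ) ≤
      (if m < ⌈(2 : ℝ) ^ ε⁻¹⌉₊ then 1 + ((2 : ℝ) ^ ε - 1)⁻¹ else 1) * ((m : ℝ) ^ ε) ^ a := by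
  have two_rpow_pos : 0 < (2 : ℝ) ^ ε - 1 := sub_pos.mpr (Real.one_lt_rpow (by norm_num) hε)
  split_ifs with hlt
  · calc (a + 1 : ℝ) ≤ (1 + ((2 : ℝ) ^ ε - 1)⁻¹) * (1 + ((2 : ℝ) ^ ε - 1)) ^ a :=
          natCast_add_one_le_mul_one_add_pow two_rpow_pos a
      _ ≤ (1 + ((2 : ℝ) ^ ε - 1)⁻¹) * ((m : ℝ) ^ ε) ^ a := by
          rw [add_sub_cancel]
          gcongr
          exact_mod_cast hm
  · have two_le : 2 ≤ (m : ℝ) ^ ε :=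
      (Real.rpow_inv_le_iff_of_pos zero_le_two m.cast_nonneg hε).mp
        (Nat.ceil_le.mp (not_lt.mp hlt))
    calc (a + 1 : ℝ) = 1 + a * 1 := by ring
      _ ≤ (1 + 1) ^ a := one_add_mul_le_pow (by norm_num) a
      _ ≤ 1 * ((m : ℝ) ^ ε) ^ a := by
          rw [one_mul, one_add_one_eq_two]
          gcongr

theorem natCast_rpow_eq_prod_primeFactors {n : ℕ} (hn : n ≠ 0) (s : ℝ) :
    (n : ℝ) ^ s = ∏ p ∈ n.primeFactors, ((p : ℝ) ^ s) ^ n.factorization p := by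
  conv_lhs => rw [← Nat.prod_factorization_pow_eq_self hn]
  rw [Finsupp.prod, Nat.cast_prod, ← Real.finsetProd_rpow _ _ fun p _ => by positivity]
  refine prod_congr rfl fun p _ => ?_
  rw [Nat.cast_pow, Real.rpow_pow_comm p.cast_nonneg]

theorem exists_card_divisors_le_rpow {ε : ℝ} (hε : 0 < ε) :
    ∃ C : ℝ, 0 < C ∧ ∀ n : ℕ, n ≠ 0 → (#n.divisors : ℝ) ≤ C * (n : ℝ) ^ ε := by
  set P : ℕ := ⌈(2 : ℝ) ^ ε⁻¹⌉₊
  set K : ℝ := 1 + ((2 : ℝ) ^ ε - 1)⁻¹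
  have one_le_K : 1 ≤ K := le_add_of_nonneg_right <|
    inv_nonneg.mpr (sub_nonneg.mpr (Real.one_le_rpow one_le_two hε.le))
  refine ⟨K ^ P, by positivity, fun n hn => ?_⟩
  calc (#n.divisors : ℝ) = ∏ p ∈ n.primeFactors, (n.factorization p + 1 : ℝ) := by
        rw [Nat.card_divisors hn]
        push_cast
        rfl
    _ ≤ ∏ p ∈ n.primeFactors, (if p < P then K else 1) * ((p : ℝ) ^ ε) ^ n.factorization p :=
        prod_le_prod (fun _ _ => by positivity) fun p hp =>
          natCast_add_one_le_mul_rpow_pow hε (Nat.prime_of_mem_primeFactors hp).two_le _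
    _ = K ^ #{p ∈ n.primeFactors | p < P} * (n : ℝ) ^ ε := by
        rw [prod_mul_distrib, natCast_rpow_eq_prod_primeFactors hn, prod_ite, prod_const,
          prod_const_one, mul_one]
    _ ≤ K ^ P * (n : ℝ) ^ ε := by
        gcongr
        refine (card_le_card fun p hp => ?_).trans_eq (card_range P)
        exact mem_range.mpr (mem_filter.mp hp).2

theorem exists_log_two_add_one_le_rpow {ε : ℝ} (hε : 0 < ε) :
    ∃ C : ℝ, 0 < C ∧ ∀ n : ℕ, n ≠ 0 → (Nat.log 2 n + 1 : ℝ) ≤ C * (n : ℝ) ^ ε := by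
  obtain ⟨C, hC, card_divisors_le⟩ := exists_card_divisors_le_rpow hε
  refine ⟨C, hC, fun n hn => ?_⟩
  calc (Nat.log 2 n + 1 : ℝ) = #(2 ^ Nat.log 2 n).divisors := by
        rw [Nat.divisors_prime_pow Nat.prime_two, card_map, card_range, Nat.cast_succ]
    _ ≤ C * ((2 ^ Nat.log 2 n : ℕ) : ℝ) ^ ε := card_divisors_le _ (by positivity)
    _ ≤ C * (n : ℝ) ^ ε := by
        gcongr
        exact Nat.pow_log_le_self 2 hn

theorem exists_log_mul_card_divisors_sq_le_rpow {ε : ℝ} (hε : 0 < ε) :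
    ∃ C : ℝ, 0 < C ∧ ∀ {m H : ℕ}, m ≠ 0 → m ≤ H →
      (9 * (Nat.log 2 (H ^ 4) + 1) * #m.divisors * #m.divisors : ℝ) ≤ C * (H : ℝ) ^ ε := by
  have hδ : 0 < ε / 6 := by positivity
  obtain ⟨C₁, hC₁, log_le⟩ := exists_log_two_add_one_le_rpow hδ
  obtain ⟨C₂, hC₂, divisors_le⟩ := exists_card_divisors_le_rpow hδ
  refine ⟨9 * C₁ * C₂ ^ 2, by positivity, fun {m H} hm hmH => ?_⟩
  set y : ℝ := (H : ℝ) ^ (ε / 6)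
  have log_H_le : (Nat.log 2 (H ^ 4) + 1 : ℝ) ≤ C₁ * y ^ 4 := by
    rw [Real.rpow_pow_comm H.cast_nonneg, ← Nat.cast_pow]
    exact log_le _ (pow_ne_zero 4 (by omega))
  have divisors_m_le : (#m.divisors : ℝ) ≤ C₂ * y := by
    refine (divisors_le m hm).trans ?_
    simp only [y]
    gcongr
  calc (9 * (Nat.log 2 (H ^ 4) + 1) * #m.divisors * #m.divisors : ℝ)
      ≤ 9 * (C₁ * y ^ 4) * (C₂ * y) * (C₂ * y) := by gcongr
    _ = 9 * C₁ * C₂ ^ 2 * y ^ 6 := by ring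
    _ = 9 * C₁ * C₂ ^ 2 * (H : ℝ) ^ ε := by
      rw [← Real.rpow_mul_natCast H.cast_nonneg]
      congr 2
      ring

theorem eq_of_sq_eq_sq_of_sign_eq {R : Type*} [Ring R] [LinearOrder R] [IsStrictOrderedRing R]
    {a b : R} (hsq : a ^ 2 = b ^ 2) (hsign : SignType.sign a = SignType.sign b) : a = b := by
  rw [← sign_mul_abs a, ← sign_mul_abs b, hsign, (sq_eq_sq_iff_abs_eq_abs a b).mp hsq]

theorem card_le_nine_mul_card_of_injOn_sign {R α β : Type*} [Zero R] [Preorder R] [DecidableLT R]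
    {s : Finset α} {t : Finset β} (f g : α → R) (k : α → β) (hk : Set.MapsTo k s t)
    (hinj : Set.InjOn (fun x => (SignType.sign (f x), SignType.sign (g x), k x)) s) :
    #s ≤ 9 * #t := by
  have key := card_le_card_of_injOn
    (t := (univ : Finset SignType) ×ˢ (univ : Finset SignType) ×ˢ t) _
    (fun x hx => mem_product.mpr ⟨mem_univ _, mem_product.mpr ⟨mem_univ _, hk hx⟩⟩) hinj
  have card_sign : #(univ : Finset SignType) = 3 := rfl
  rw [card_product, card_product, card_sign] at key
  omega

theorem dvd_of_sq_dvd_sq_mul_squarefree {α : Type*} [CommMonoidWithZero α] [GCDMonoid α]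
    {g c D : α} (hc : c ≠ 0) (hD : Squarefree D) (h : g ^ 2 ∣ c ^ 2 * D) : g ∣ c := by
  obtain ⟨g', c', hg, hc', hunit⟩ := extract_gcd g c
  set k := gcd g c
  have hk : k ≠ 0 := fun hk => hc (by rw [hc', hk, zero_mul])
  have hdvd : g' ^ 2 ∣ c' ^ 2 * D := by
    rw [hg, hc', mul_pow, mul_pow, mul_assoc] at h
    exact (mul_dvd_mul_iff_left (pow_ne_zero 2 hk)).mp h
  have hg'D : g' * g' ∣ D :=
    sq g' ▸ (gcd_isUnit_iff_isRelPrime.mp hunit).pow.dvd_of_dvd_mul_left hdvd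
  calc g = k * g' := hg
    _ ∣ k * c' := mul_dvd_mul_left k (hD g' hg'D).dvd
    _ = c := hc'.symm

theorem exists_eq_sq_mul_squarefree {n : ℤ} (hn : n ≠ 0) :
    ∃ f d : ℤ, f ≠ 0 ∧ Squarefree d ∧ n = f ^ 2 * d := by
  obtain ⟨d, f, hnat, hd⟩ := Nat.sq_mul_squarefree n.natAbs
  have hf : (f : ℤ) ≠ 0 := by
    rintro h
    rw [Int.natCast_eq_zero] at h
    exact hn (Int.natAbs_eq_zero.mp (by rw [← hnat, h]; ring))
  have habs : |n| = (f : ℤ) ^ 2 * d := by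
    rw [Int.abs_eq_natAbs, ← hnat]
    push_cast
    rfl
  rcases abs_choice n with h | h
  · exact ⟨f, d, hf, Int.squarefree_natCast.mpr hd, by rw [← habs, h]⟩
  · refine ⟨f, -d, hf, Int.squarefree_natAbs.mp ?_, by linarith⟩
    rwa [Int.natAbs_neg, Int.natAbs_natCast]

theorem mul_dvd_gcd_mul {d e m : ℤ} (hd : d ∣ m) (he : e ∣ m) : d * e ∣ Int.gcd d e * m := by
  rw [Int.gcd_eq_gcd_ab, add_mul]
  refine dvd_add ?_ ?_
  · exact (mul_dvd_mul_left d he).trans ⟨d.gcdA e, by ring⟩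
  · exact (mul_dvd_mul_right hd e).trans ⟨d.gcdB e, by ring⟩

/-! ### Elements of a given norm in `ℤ√D` -/

theorem five_mul_le_four_mul_of_pell_four {D u₁ v₁ u₂ v₂ : ℤ} (h₁ : u₁ ^ 2 - D * v₁ ^ 2 = 4)
    (h₂ : u₂ ^ 2 - D * v₂ ^ 2 = 4) (hu₁ : 0 < u₁) (hv₁ : 0 ≤ v₁) (hv₂ : 0 ≤ v₂) (hu : u₁ < u₂) :
    5 * u₁ ≤ 4 * u₂ := by
  rcases le_or_gt D 0 with hD | hD
  · have : u₂ ≤ 2 := by nlinarith [mul_nonneg (neg_nonneg.mpr hD) (sq_nonneg v₂)]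
    omega
  -- `A + B√D` is the product of `u₂ + v₂√D` with the conjugate of `u₁ + v₁√D`, of norm `16`.
  set A : ℤ := u₁ * u₂ - D * v₁ * v₂
  set B : ℤ := u₁ * v₂ - u₂ * v₁
  have hu_sq : u₁ ^ 2 < u₂ ^ 2 := pow_lt_pow_left₀ hu hu₁.le two_ne_zero
  have hv_sq : v₁ ^ 2 < v₂ ^ 2 := lt_of_mul_lt_mul_left (by linarith) hD.le
  have norm_AB : A ^ 2 - D * B ^ 2 = 16 := by
    linear_combination (u₂ ^ 2 - D * v₂ ^ 2) * h₁ + 4 * h₂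
  have B_pos : 0 < B := by
    refine sub_pos.mpr (lt_of_pow_lt_pow_left₀ 2 (by positivity) (sub_pos.mp ?_))
    calc 0 < 4 * (v₂ ^ 2 - v₁ ^ 2) := by linarith
      _ = (u₁ * v₂) ^ 2 - (u₂ * v₁) ^ 2 := by linear_combination v₁ ^ 2 * h₂ - v₂ ^ 2 * h₁
  have A_pos : 0 < A := by
    refine sub_pos.mpr (lt_of_pow_lt_pow_left₀ 2 (mul_nonneg hu₁.le (by omega)) (sub_pos.mp ?_))
    calc 0 < 16 + 4 * (D * v₁ ^ 2) + 4 * (D * v₂ ^ 2) := by positivity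
      _ = (u₁ * u₂) ^ 2 - (D * v₁ * v₂) ^ 2 := by
        linear_combination -u₂ ^ 2 * h₁ - (4 + D * v₁ ^ 2) * h₂
  have five_le_A : 5 ≤ A := by
    refine Int.add_one_le_of_lt (lt_of_pow_lt_pow_left₀ (a := 4) 2 A_pos.le ?_)
    linarith [mul_pos hD (pow_pos B_pos 2)]
  calc 5 * u₁ ≤ A * u₁ + D * v₁ * B := by nlinarith [mul_nonneg (mul_nonneg hD.le hv₁) B_pos.le]
    _ = 4 * u₂ := by linear_combination u₂ * h₁

section Zsqrtd

variable {D : ℤ}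

theorem natAbs_re_eq_of_log_eq {z w : ℤ√D} (hz : z.norm = 4) (hw : w.norm = 4)
    (hsign : SignType.sign z.re = SignType.sign w.re)
    (hlog : Nat.log 2 (z.re.natAbs ^ 4) = Nat.log 2 (w.re.natAbs ^ 4)) :
    z.re.natAbs = w.re.natAbs := by
  wlog hlt : z.re.natAbs < w.re.natAbs generalizing z w
  · rcases (not_lt.mp hlt).eq_or_lt with h | h
    · exact h.symm
    · exact (this hw hz hsign.symm hlog.symm h).symm
  have hw0 : w.re ≠ 0 := Int.natAbs_pos.mp (hlt.trans_le' (Nat.zero_le _))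
  have hz0 : z.re ≠ 0 := by rwa [← sign_ne_zero, hsign, sign_ne_zero]
  have pell (x : ℤ√D) (hx : x.norm = 4) : |x.re| ^ 2 - D * |x.im| ^ 2 = 4 := by
    rw [sq_abs, sq_abs, ← hx, Zsqrtd.norm_def]
    ring
  have ratio : 5 * z.re.natAbs ≤ 4 * w.re.natAbs := by
    zify at hlt ⊢
    exact five_mul_le_four_mul_of_pell_four (pell z hz) (pell w hw) (abs_pos.mpr hz0)
      (abs_nonneg _) (abs_nonneg _) hlt
  have doubling : z.re.natAbs ^ 4 * 2 ≤ w.re.natAbs ^ 4 := by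
    have := Nat.pow_le_pow_left ratio 4
    rw [mul_pow, mul_pow] at this
    omega
  have := Nat.log_mono_right (b := 2) doubling
  rw [Nat.log_mul_base one_lt_two (by positivity)] at this
  omega

theorem card_norm_eq_four_le (hD : D ≠ 0) {U : ℕ} {S : Finset (ℤ√D)}
    (hnorm : ∀ z ∈ S, z.norm = 4) (hU : ∀ z ∈ S, |z.re| ≤ U) :
    #S ≤ 9 * (Nat.log 2 (U ^ 4) + 1) := by
  rw [← card_range (Nat.log 2 (U ^ 4) + 1)]
  refine card_le_nine_mul_card_of_injOn_sign Zsqrtd.re Zsqrtd.im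
    (fun z => Nat.log 2 (z.re.natAbs ^ 4)) (fun z hz => ?_) fun z hz w hw h => ?_
  · have : z.re.natAbs ≤ U := by zify; exact hU z hz
    simp only [coe_range, Set.mem_Iio, Nat.lt_succ_iff]
    gcongr
  · obtain ⟨sign_re, sign_im, hlog⟩ : _ ∧ _ ∧ _ := by simpa only [Prod.mk.injEq] using h
    have re_sq := Int.natAbs_eq_iff_sq_eq.mp
      (natAbs_re_eq_of_log_eq (hnorm z hz) (hnorm w hw) sign_re hlog)
    have norm_eq := (hnorm z hz).trans (hnorm w hw).symm
    rw [Zsqrtd.norm_def, Zsqrtd.norm_def] at norm_eq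
    have im_sq : z.im ^ 2 = w.im ^ 2 :=
      mul_left_cancel₀ hD (by linear_combination re_sq - norm_eq)
    exact Zsqrtd.ext (eq_of_sq_eq_sq_of_sign_eq re_sq sign_re)
      (eq_of_sq_eq_sq_of_sign_eq im_sq sign_im)

variable {z w u : ℤ√D}

theorem isCoprime_im_norm (hz : IsCoprime z.re z.im) : IsCoprime z.im z.norm := by
  rw [Zsqrtd.norm_def, show z.re * z.re - D * z.im * z.im
    = z.re * z.re + z.im * (-(D * z.im)) by ring]
  exact (hz.symm.mul_right hz.symm).add_mul_left_right _

theorem dvd_im_mul_star_of_dvd_im_mul {m : ℤ} (hu : IsCoprime m u.im) (hz : m ∣ (z * u).im)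
    (hw : m ∣ (w * u).im) : m ∣ (w * star z).im := by
  refine hu.dvd_of_dvd_mul_left ?_
  convert dvd_sub (hz.mul_left w.im) (hw.mul_left z.im) using 1
  simp only [Zsqrtd.im_mul, Zsqrtd.re_star, Zsqrtd.im_star]
  ring

theorem dvd_im_mul_of_gcd_eq {d e : ℤ} (hd : d ≠ 0) (hz : z.norm = d * e) (hu : u.norm = d * e)
    (hgcd : (Int.gcd (z * star u).im (d * e) : ℤ) = d) : e ∣ (z * u).im := by
  have hdvd : d * e ∣ (z * star u).im * (z * u).im := by
    refine ⟨z.im ^ 2 - u.im ^ 2, ?_⟩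
    rw [Zsqrtd.norm_def] at hz hu
    simp only [Zsqrtd.im_mul, Zsqrtd.re_star, Zsqrtd.im_star]
    linear_combination z.im ^ 2 * hu - u.im ^ 2 * hz
  have := dvd_gcd_mul_of_dvd_mul hdvd
  rwa [gcd_comm, ← Int.coe_gcd, hgcd, mul_dvd_mul_iff_left hd] at this

theorem dvd_two_of_dvd_im_mul (hD : Squarefree D) {g : ℤ} (hu : IsCoprime g u.im)
    (hz : IsCoprime g z.im) (hnorm : g ^ 2 ∣ z.norm) (hstar : g ∣ (z * star u).im)
    (hmul : g ∣ (z * u).im) : g ∣ 2 := by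
  have h_re : g ∣ 2 * z.re := by
    refine hu.dvd_of_dvd_mul_left ?_
    convert dvd_sub hmul hstar using 1
    simp only [Zsqrtd.im_mul, Zsqrtd.re_star, Zsqrtd.im_star]
    ring
  refine dvd_of_sq_dvd_sq_mul_squarefree two_ne_zero hD ?_
  refine (hz.pow (m := 2) (n := 2)).dvd_of_dvd_mul_left ?_
  convert dvd_sub (pow_dvd_pow_of_dvd h_re 2) (hnorm.mul_left 4) using 1
  rw [Zsqrtd.norm_def]
  ring

/- With `d` the common gcd and `N = d * e`, both `d` and `e` divide the imaginary part, and since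
`D` is squarefree the common factors of `d` and `e` divide `2`. -/
theorem dvd_two_mul_im_mul_star {N : ℤ} (hD : Squarefree D) (hN : N ≠ 0) (hu : u.norm = N)
    (hz : z.norm = N) (hw : w.norm = N) (hu_cop : IsCoprime N u.im) (hz_cop : IsCoprime N z.im)
    (hgcd : Int.gcd (z * star u).im N = Int.gcd (w * star u).im N) :
    N ∣ 2 * (w * star z).im := by
  obtain ⟨d, hd⟩ : ∃ d : ℤ, (Int.gcd (z * star u).im N : ℤ) = d := ⟨_, rfl⟩
  have hd' : (Int.gcd (w * star u).im N : ℤ) = d := by rw [← hgcd, hd]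
  have hd0 : d ≠ 0 := by
    rw [← hd]
    exact_mod_cast (Int.gcd_pos_of_ne_zero_right _ hN).ne'
  have hdz : d ∣ (z * star u).im := hd ▸ Int.gcd_dvd_left ..
  have hdw : d ∣ (w * star u).im := hd' ▸ Int.gcd_dvd_left ..
  obtain ⟨e, rfl⟩ : d ∣ N := hd ▸ Int.gcd_dvd_right ..
  have hez : e ∣ (z * u).im := dvd_im_mul_of_gcd_eq hd0 hz hu hd
  have hew : e ∣ (w * u).im := dvd_im_mul_of_gcd_eq hd0 hw hu hd'
  have hd_im : d ∣ (w * star z).im := by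
    refine dvd_im_mul_star_of_dvd_im_mul ?_ hdz hdw
    rw [Zsqrtd.im_star]
    exact hu_cop.of_mul_left_left.neg_right
  have he_im : e ∣ (w * star z).im :=
    dvd_im_mul_star_of_dvd_im_mul hu_cop.of_mul_left_right hez hew
  have gcd_dvd_two : (Int.gcd d e : ℤ) ∣ 2 := by
    have hgd : (Int.gcd d e : ℤ) ∣ d := Int.gcd_dvd_left ..
    have hge : (Int.gcd d e : ℤ) ∣ e := Int.gcd_dvd_right ..
    have hgN : (Int.gcd d e : ℤ) ∣ d * e := hgd.mul_right e
    refine dvd_two_of_dvd_im_mul hD (hu_cop.of_isCoprime_of_dvd_left hgN)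
      (hz_cop.of_isCoprime_of_dvd_left hgN) ?_ (hgd.trans hdz) (hge.trans hez)
    rw [hz, sq]
    exact mul_dvd_mul hgd hge
  exact (mul_dvd_gcd_mul hd_im he_im).trans (mul_dvd_mul_right gcd_dvd_two _)

/- The real part is recovered from `(w * star z) * z = N * w`. -/
theorem intCast_norm_dvd_two_mul_mul_star (hz : IsCoprime z.norm z.im)
    (him : z.norm ∣ 2 * (w * star z).im) : (z.norm : ℤ√D) ∣ 2 * (w * star z) := by
  have hre : z.norm ∣ 2 * (w * star z).re := by
    refine hz.dvd_of_dvd_mul_left ?_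
    have key : z.im * (2 * (w * star z).re) =
        2 * w.im * z.norm - z.re * (2 * (w * star z).im) := by
      simp only [Zsqrtd.norm_def, Zsqrtd.re_mul, Zsqrtd.im_mul, Zsqrtd.re_star, Zsqrtd.im_star]
      ring
    exact key ▸ dvd_sub (dvd_mul_left ..) (him.mul_left _)
  rw [Zsqrtd.intCast_dvd, two_mul, Zsqrtd.re_add, Zsqrtd.im_add, ← two_mul, ← two_mul]
  exact ⟨hre, him⟩

theorem abs_re_mul_star_le (hD : D ≠ 0) {T : ℕ} (hDT : |D| ≤ T) (hw_re : |w.re| ≤ T)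
    (hw_im : |w.im| ≤ T) (hz_re : |z.re| ≤ T) (hz_im : |z.im| ≤ T) :
    |(w * star z).re| ≤ 2 * T ^ 3 := by
  have one_le_T : 1 ≤ (T : ℤ) := (Int.one_le_abs hD).trans hDT
  calc |(w * star z).re| = |w.re * z.re + D * w.im * (-z.im)| := by
        rw [Zsqrtd.re_mul, Zsqrtd.re_star, Zsqrtd.im_star]
    _ ≤ |w.re| * |z.re| + |D| * |w.im| * |z.im| := by
        rw [← abs_neg z.im, ← abs_mul, ← abs_mul, ← abs_mul]
        exact abs_add_le _ _
    _ ≤ T * T + T * T * T := by gcongr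
    _ = T ^ 2 + T ^ 3 := by ring
    _ ≤ T ^ 3 + T ^ 3 := by
        gcongr
        exact Nat.le_succ 2
    _ = 2 * T ^ 3 := by ring

theorem card_le_of_norm_dvd_two_mul_mul_star (hD : D ≠ 0) (hz : z.norm ≠ 0) {T : ℕ} (hDT : |D| ≤ T)
    (hz_re : |z.re| ≤ T) (hz_im : |z.im| ≤ T) {S : Finset (ℤ√D)}
    (hnorm : ∀ w ∈ S, w.norm = z.norm) (hre : ∀ w ∈ S, |w.re| ≤ T) (him : ∀ w ∈ S, |w.im| ≤ T)
    (hdvd : ∀ w ∈ S, (z.norm : ℤ√D) ∣ 2 * (w * star z)) :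
    #S ≤ 9 * (Nat.log 2 ((4 * T ^ 3) ^ 4) + 1) := by
  choose! φ hφ using hdvd
  have φ_injOn : Set.InjOn φ S := fun w hw w' hw' h => by
    have mul_star_eq : 2 * (w * star z) = 2 * (w' * star z) := by
      rw [hφ w hw, hφ w' hw', h]
    refine Zsqrtd.eq_of_smul_eq_smul_left (mul_ne_zero two_ne_zero hz) ?_
    push_cast
    rw [Zsqrtd.norm_eq_mul_conj]
    linear_combination z * mul_star_eq
  have norm_φ : ∀ w ∈ S, (φ w).norm = 4 := fun w hw => by
    refine mul_left_cancel₀ (pow_ne_zero 2 hz) ?_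
    have := congrArg Zsqrtd.norm (hφ w hw)
    rw [Zsqrtd.norm_mul, Zsqrtd.norm_mul, Zsqrtd.norm_mul, Zsqrtd.norm_intCast,
      Zsqrtd.norm_conj, hnorm w hw] at this
    calc z.norm ^ 2 * (φ w).norm = (2 : ℤ√D).norm * (z.norm * z.norm) := by rw [this, sq]
      _ = z.norm ^ 2 * 4 := by
        rw [show (2 : ℤ√D).norm = 4 from Zsqrtd.norm_intCast 2]
        ring
  have re_φ_le : ∀ w ∈ S, |(φ w).re| ≤ ((4 * T ^ 3 : ℕ) : ℤ) := fun w hw => by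
    have re_eq : z.norm * (φ w).re = 2 * (w * star z).re := by
      rw [← Zsqrtd.re_smul, ← hφ w hw, two_mul, Zsqrtd.re_add, two_mul]
    calc |(φ w).re| ≤ |z.norm * (φ w).re| := by
          rw [abs_mul]
          exact le_mul_of_one_le_left (abs_nonneg _) (Int.one_le_abs hz)
      _ = 2 * |(w * star z).re| := by rw [re_eq, abs_mul, abs_two]
      _ ≤ 2 * (2 * T ^ 3) := by
          gcongr
          exact abs_re_mul_star_le hD hDT (hre w hw) (him w hw) hz_re hz_im
      _ = ((4 * T ^ 3 : ℕ) : ℤ) := by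
          push_cast
          ring
  rw [← card_image_of_injOn φ_injOn]
  exact card_norm_eq_four_le hD (forall_mem_image.mpr norm_φ) (forall_mem_image.mpr re_φ_le)

theorem card_norm_eq_le_of_isCoprime {N : ℤ} (hD : Squarefree D) (hN : N ≠ 0) {T : ℕ}
    (hDT : |D| ≤ T) {S : Finset (ℤ√D)} (hnorm : ∀ w ∈ S, w.norm = N)
    (hre : ∀ w ∈ S, |w.re| ≤ T) (him : ∀ w ∈ S, |w.im| ≤ T)
    (hcop : ∀ w ∈ S, IsCoprime w.re w.im) :
    #S ≤ 9 * (Nat.log 2 ((4 * T ^ 3) ^ 4) + 1) * #N.natAbs.divisors := by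
  rcases S.eq_empty_or_nonempty with rfl | ⟨u, hu⟩
  · simp
  have cop_norm (w : ℤ√D) (hw : w ∈ S) : IsCoprime N w.im :=
    hnorm w hw ▸ (isCoprime_im_norm (hcop w hw)).symm
  refine card_le_mul_card_image_of_maps_to (f := fun w => Int.gcd (w * star u).im N)
    (fun w _ => Nat.mem_divisors.mpr ⟨?_, Int.natAbs_ne_zero.mpr hN⟩) _ fun g _ => ?_
  · exact Int.natCast_dvd.mp (Int.gcd_dvd_right ..)
  rcases eq_empty_or_nonempty {w ∈ S | Int.gcd (w * star u).im N = g} with h | ⟨z, hz⟩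
  · exact h ▸ Nat.zero_le _
  simp only [mem_filter] at hz
  refine card_le_of_norm_dvd_two_mul_mul_star (z := z) hD.ne_zero ?_ hDT (hre z hz.1)
    (him z hz.1) ?_ ?_ ?_ ?_
  · rwa [hnorm z hz.1]
  all_goals intro w hw; simp only [mem_filter] at hw
  · rw [hnorm w hw.1, hnorm z hz.1]
  · exact hre w hw.1
  · exact him w hw.1
  · refine intCast_norm_dvd_two_mul_mul_star ?_ ?_
    · exact hnorm z hz.1 ▸ cop_norm z hz.1
    · rw [hnorm z hz.1]
      exact dvd_two_mul_im_mul_star hD hN (hnorm u hu) (hnorm z hz.1) (hnorm w hw.1)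
        (cop_norm u hu) (cop_norm z hz.1) (hz.2.trans hw.2.symm)

theorem card_norm_eq_le_of_gcd_eq {N : ℤ} (hD : Squarefree D) (hN : N ≠ 0) {T : ℕ}
    (hDT : |D| ≤ T) {g : ℕ} {S : Finset (ℤ√D)} (hnorm : ∀ w ∈ S, w.norm = N)
    (hre : ∀ w ∈ S, |w.re| ≤ T) (him : ∀ w ∈ S, |w.im| ≤ T)
    (hgcd : ∀ w ∈ S, Int.gcd w.re w.im = g) :
    #S ≤ 9 * (Nat.log 2 ((4 * T ^ 3) ^ 4) + 1) * #N.natAbs.divisors := by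
  rcases S.eq_empty_or_nonempty with rfl | ⟨z, hz⟩
  · exact Nat.zero_le _
  have ne_zero (w : ℤ√D) (hw : w ∈ S) : w ≠ 0 := fun h => hN <| by
    rw [← hnorm w hw, h, Zsqrtd.norm_zero]
  have exists_primitive (w : ℤ√D) (hw : w ∈ S) :
      ∃ b : ℤ√D, w = ((g : ℤ) : ℤ√D) * b ∧ IsCoprime b.re b.im :=
    hgcd w hw ▸ Zsqrtd.exists_coprime_of_gcd_pos ((Zsqrtd.gcd_pos_iff w).mpr (ne_zero w hw))
  choose! ψ w_eq ψ_cop using exists_primitive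
  have hg : (g : ℤ) ≠ 0 := fun h => ne_zero z hz (by rw [w_eq z hz, h, Int.cast_zero, zero_mul])
  have norm_ψ (w : ℤ√D) (hw : w ∈ S) : N = (g : ℤ) ^ 2 * (ψ w).norm := by
    rw [sq, ← Zsqrtd.norm_intCast (d := D), ← Zsqrtd.norm_mul, ← w_eq w hw, hnorm w hw]
  have norm_ψ_ne_zero : (ψ z).norm ≠ 0 := fun h => hN (by rw [norm_ψ z hz, h, mul_zero])
  have ψ_injOn : Set.InjOn ψ S := fun w hw w' hw' h => by rw [w_eq w hw, w_eq w' hw', h]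
  have abs_le_of_mul {x : ℤ} (hx : |g * x| ≤ T) : |x| ≤ T := by
    rw [abs_mul] at hx
    exact (le_mul_of_one_le_left (abs_nonneg x) (Int.one_le_abs hg)).trans hx
  calc #S = #(S.image ψ) := (card_image_of_injOn ψ_injOn).symm
    _ ≤ 9 * (Nat.log 2 ((4 * T ^ 3) ^ 4) + 1) * #(ψ z).norm.natAbs.divisors := by
      refine card_norm_eq_le_of_isCoprime hD norm_ψ_ne_zero hDT ?_ ?_ ?_
        (forall_mem_image.mpr ψ_cop) <;> refine forall_mem_image.mpr fun w hw => ?_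
      · exact mul_left_cancel₀ (pow_ne_zero 2 hg) ((norm_ψ w hw).symm.trans (norm_ψ z hz))
      · exact abs_le_of_mul (Zsqrtd.re_smul _ _ ▸ w_eq w hw ▸ hre w hw)
      · exact abs_le_of_mul (Zsqrtd.im_smul _ _ ▸ w_eq w hw ▸ him w hw)
    _ ≤ 9 * (Nat.log 2 ((4 * T ^ 3) ^ 4) + 1) * #N.natAbs.divisors := by
      gcongr
      exact Int.natAbs_dvd_natAbs.mpr ⟨_, (norm_ψ z hz).trans (mul_comm _ _)⟩

theorem card_norm_eq_le {N : ℤ} (hD : Squarefree D) (hN : N ≠ 0) {T : ℕ} (hDT : |D| ≤ T)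
    {S : Finset (ℤ√D)} (hnorm : ∀ w ∈ S, w.norm = N) (hre : ∀ w ∈ S, |w.re| ≤ T)
    (him : ∀ w ∈ S, |w.im| ≤ T) :
    #S ≤ 9 * (Nat.log 2 ((4 * T ^ 3) ^ 4) + 1) * #N.natAbs.divisors * #N.natAbs.divisors := by
  refine card_le_mul_card_image_of_maps_to (f := fun w => Int.gcd w.re w.im)
    (fun w hw => Nat.mem_divisors.mpr ⟨?_, Int.natAbs_ne_zero.mpr hN⟩) _ fun g _ => ?_
  · refine Int.natCast_dvd.mp ?_
    rw [← hnorm w hw, Zsqrtd.norm_def]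
    exact dvd_sub ((Int.gcd_dvd_left ..).mul_right _) ((Int.gcd_dvd_right ..).mul_left _)
  · exact card_norm_eq_le_of_gcd_eq hD hN hDT (fun w hw => hnorm w (mem_filter.mp hw).1)
      (fun w hw => hre w (mem_filter.mp hw).1) (fun w hw => him w (mem_filter.mp hw).1)
      fun w hw => (mem_filter.mp hw).2

end Zsqrtd

theorem exists_card_norm_eq_le_rpow_of_squarefree {ε : ℝ} (hε : 0 < ε) :
    ∃ C : ℝ, 0 < C ∧ ∀ {D N : ℤ} {T : ℕ} {S : Finset (ℤ√D)}, Squarefree D → N ≠ 0 → |D| ≤ T →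
      (∀ w ∈ S, w.norm = N) → (∀ w ∈ S, |w.re| ≤ T) → (∀ w ∈ S, |w.im| ≤ T) →
      (#S : ℝ) ≤ C * (T : ℝ) ^ ε := by
  obtain ⟨C, hC, hle⟩ := exists_log_mul_card_divisors_sq_le_rpow (ε := ε / 3) (by positivity)
  refine ⟨C * (4 : ℝ) ^ (ε / 3), by positivity, fun {D N T S} hD hN hDT hnorm hre him => ?_⟩
  rcases S.eq_empty_or_nonempty with rfl | ⟨z, hz⟩
  · rw [card_empty, Nat.cast_zero]
    positivity
  have hNT : N.natAbs ≤ 4 * T ^ 3 := by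
    have := abs_re_mul_star_le hD.ne_zero hDT (hre z hz) (him z hz) (hre z hz) (him z hz)
    rw [← Zsqrtd.norm_eq_mul_conj, Zsqrtd.re_intCast, hnorm z hz] at this
    zify
    exact this.trans (by gcongr; norm_num)
  calc (#S : ℝ) ≤ 9 * (Nat.log 2 ((4 * T ^ 3) ^ 4) + 1) * #N.natAbs.divisors
          * #N.natAbs.divisors := by exact_mod_cast card_norm_eq_le hD hN hDT hnorm hre him
    _ ≤ C * ((4 * T ^ 3 : ℕ) : ℝ) ^ (ε / 3) := hle (Int.natAbs_ne_zero.mpr hN) hNT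
    _ = C * (4 : ℝ) ^ (ε / 3) * (T : ℝ) ^ ε := by
      push_cast
      rw [Real.mul_rpow (by positivity) (by positivity), mul_assoc, ← Real.rpow_natCast_mul
        T.cast_nonneg]
      congr 3
      push_cast
      ring

/-! ### Integral binary and ternary forms -/

/- With `-ab = f²d`, the map `(x, y) ↦ ax + fy√d` sends solutions to elements of norm `aN`. -/
theorem exists_card_binary_form_eq_le_rpow {ε : ℝ} (hε : 0 < ε) :
    ∃ C : ℝ, 0 < C ∧ ∀ {a b N : ℤ} {T : ℕ} {S : Finset (ℤ × ℤ)}, a ≠ 0 → b ≠ 0 → N ≠ 0 →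
      |a| ≤ T → |b| ≤ T → (∀ x ∈ S, a * x.1 ^ 2 + b * x.2 ^ 2 = N) →
      (∀ x ∈ S, |x.1| ≤ T) → (∀ x ∈ S, |x.2| ≤ T) → (#S : ℝ) ≤ C * (T : ℝ) ^ ε := by
  obtain ⟨C, hC, card_norm_eq_le⟩ :=
    exists_card_norm_eq_le_rpow_of_squarefree (ε := ε / 2) (by positivity)
  refine ⟨C, hC, fun {a b N T S} ha hb hN haT hbT hform hx hy => ?_⟩
  obtain ⟨f, d, hf, hd, hab⟩ := exists_eq_sq_mul_squarefree (neg_ne_zero.mpr (mul_ne_zero ha hb))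
  have habT : |f| ^ 2 * |d| ≤ T ^ 2 := by
    rw [← abs_pow, ← abs_mul, ← hab, abs_neg, abs_mul, sq]
    gcongr
  have hfT : |f| ≤ T := by
    refine le_of_sq_le_sq ?_ (Int.natCast_nonneg T)
    exact (le_mul_of_one_le_right (by positivity) (Int.one_le_abs hd.ne_zero)).trans habT
  have hdT : |d| ≤ (T ^ 2 : ℕ) := by
    push_cast
    exact (le_mul_of_one_le_left (by positivity) (one_le_pow₀ (Int.one_le_abs hf))).trans habT
  have mul_le {u v : ℤ} (hu : |u| ≤ T) (hv : |v| ≤ T) : |u * v| ≤ (T ^ 2 : ℕ) := by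
    push_cast
    rw [abs_mul, sq]
    gcongr
  let φ : ℤ × ℤ → ℤ√d := fun x => ⟨a * x.1, f * x.2⟩
  have φ_inj : Function.Injective φ := fun x y h =>
    Prod.ext (mul_left_cancel₀ ha (congrArg Zsqrtd.re h))
      (mul_left_cancel₀ hf (congrArg Zsqrtd.im h))
  calc (#S : ℝ) = #(S.image φ) := by rw [card_image_of_injective S φ_inj]
    _ ≤ C * ((T ^ 2 : ℕ) : ℝ) ^ (ε / 2) := by
      refine card_norm_eq_le hd (mul_ne_zero ha hN) hdT ?_ ?_ ?_ <;>
        refine forall_mem_image.mpr fun x hxS => ?_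
      · rw [Zsqrtd.norm_def]
        linear_combination a * hform x hxS + x.2 ^ 2 * hab
      · exact mul_le haT (hx x hxS)
      · exact mul_le hfT (hy x hxS)
    _ = C * (T : ℝ) ^ ε := by
      rw [Nat.cast_pow, ← Real.rpow_natCast_mul T.cast_nonneg, Nat.cast_ofNat,
        mul_div_cancel₀ ε two_ne_zero]

theorem card_Icc_neg_natCast (X : ℕ) : #(Icc (-(X : ℤ)) X) = 2 * X + 1 := by
  rw [Int.card_Icc]
  omega

theorem card_le_of_binary_form_eq_zero {A b c : ℤ} {X : ℕ} {V : Finset ℤ}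
    {S : Finset (ℤ × ℤ × ℤ)} (hA : A ≠ 0) (hc : c ≠ 0)
    (hform : ∀ x ∈ S, A * x.1 ^ 2 ∈ V) (hzero : ∀ x ∈ S, b * x.2.1 ^ 2 + c * x.2.2 ^ 2 = 0)
    (hX : ∀ x ∈ S, |x.2.1| ≤ X) : #S ≤ 9 * (#V * (2 * X + 1)) := by
  rw [← card_Icc_neg_natCast, ← card_product]
  refine card_le_nine_mul_card_of_injOn_sign Prod.fst (fun x => x.2.2)
    (fun x => (A * x.1 ^ 2, x.2.1))
    (fun x hx => mem_product.mpr ⟨hform x hx, mem_Icc.mpr (abs_le.mp (hX x hx))⟩)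
    fun x hx y hy h => ?_
  obtain ⟨sign₁, sign₃, hA_sq, h₂⟩ : _ ∧ _ ∧ _ ∧ _ := by simpa only [Prod.mk.injEq] using h
  have sq₃ : x.2.2 ^ 2 = y.2.2 ^ 2 :=
    mul_left_cancel₀ hc (by linear_combination hzero x hx - hzero y hy - b * congrArg (· ^ 2) h₂)
  exact Prod.ext (eq_of_sq_eq_sq_of_sign_eq (mul_left_cancel₀ hA hA_sq) sign₁)
    (Prod.ext h₂ (eq_of_sq_eq_sq_of_sign_eq sq₃ sign₃))

theorem exists_card_ternary_form_mem_le_of_binary_form_ne_zero {ε : ℝ} (hε : 0 < ε) :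
    ∃ C : ℝ, 0 < C ∧ ∀ {A B b c : ℤ} {T X : ℕ} {V : Finset ℤ} {S : Finset (ℤ × ℤ × ℤ)},
      B ≠ 0 → b ≠ 0 → c ≠ 0 → |b| ≤ T → |c| ≤ T → X ≤ T →
      (∀ x ∈ S, A * x.1 ^ 2 + B * (b * x.2.1 ^ 2 + c * x.2.2 ^ 2) ∈ V) →
      (∀ x ∈ S, b * x.2.1 ^ 2 + c * x.2.2 ^ 2 ≠ 0) →
      (∀ x ∈ S, |x.1| ≤ X ∧ |x.2.1| ≤ X ∧ |x.2.2| ≤ X) →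
      (#S : ℝ) ≤ C * (T : ℝ) ^ ε * (#V * (2 * X + 1)) := by
  obtain ⟨C, hC, card_binary_le⟩ := exists_card_binary_form_eq_le_rpow hε
  refine ⟨C, hC, fun {A B b c T X V S} hB hb hc hbT hcT hXT hform hne hX => ?_⟩
  let f : ℤ × ℤ × ℤ → ℤ × ℤ := fun x => (A * x.1 ^ 2 + B * (b * x.2.1 ^ 2 + c * x.2.2 ^ 2), x.1)
  have card_fiber_le (v : ℤ × ℤ) : #{x ∈ S | f x = v} ≤ ⌊C * (T : ℝ) ^ ε⌋₊ := by
    rcases eq_empty_or_nonempty {x ∈ S | f x = v} with h | ⟨z, hz⟩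
    · exact h ▸ Nat.zero_le _
    have mem_fiber {x : ℤ × ℤ × ℤ} (hx : x ∈ ({x ∈ S | f x = v} : Finset _)) :
        x ∈ S ∧ f x = f z :=
      ⟨(mem_filter.mp hx).1, (mem_filter.mp hx).2.trans (mem_filter.mp hz).2.symm⟩
    have snd_injOn : Set.InjOn Prod.snd ({x ∈ S | f x = v} : Finset _) := fun x hx y hy h =>
      Prod.ext (congrArg Prod.snd ((mem_fiber hx).2.trans (mem_fiber hy).2.symm)) h
    rw [← card_image_of_injOn snd_injOn]
    refine Nat.le_floor (card_binary_le (N := b * z.2.1 ^ 2 + c * z.2.2 ^ 2) hb hc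
      (hne z (mem_fiber hz).1) hbT hcT ?_ ?_ ?_) <;> refine forall_mem_image.mpr fun x hx => ?_ <;>
      obtain ⟨hxS, hfx⟩ := mem_fiber hx
    · have h₁ : x.1 = z.1 := congrArg Prod.snd hfx
      have hval := congrArg Prod.fst hfx
      simp only [f, h₁] at hval
      exact mul_left_cancel₀ hB (add_left_cancel hval)
    · exact (hX x hxS).2.1.trans (by exact_mod_cast hXT)
    · exact (hX x hxS).2.2.trans (by exact_mod_cast hXT)
  have mapsTo : ∀ x ∈ S, f x ∈ V ×ˢ Icc (-(X : ℤ)) X := fun x hx =>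
    mem_product.mpr ⟨hform x hx, mem_Icc.mpr (abs_le.mp (hX x hx).1)⟩
  have card_le := card_le_mul_card_image_of_maps_to mapsTo _ fun v _ => card_fiber_le v
  rw [card_product, card_Icc_neg_natCast] at card_le
  calc (#S : ℝ) ≤ ⌊C * (T : ℝ) ^ ε⌋₊ * (#V * (2 * X + 1)) := by exact_mod_cast card_le
    _ ≤ C * (T : ℝ) ^ ε * (#V * (2 * X + 1)) := by
      gcongr
      exact Nat.floor_le (by positivity)

theorem exists_card_ternary_form_mem_le {ε : ℝ} (hε : 0 < ε) :
    ∃ C : ℝ, 0 < C ∧ ∀ {A B b c : ℤ} {T X : ℕ} {V : Finset ℤ} {S : Finset (ℤ × ℤ × ℤ)},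
      A ≠ 0 → B ≠ 0 → b ≠ 0 → c ≠ 0 → |b| ≤ T → |c| ≤ T → X ≤ T →
      (∀ x ∈ S, A * x.1 ^ 2 + B * (b * x.2.1 ^ 2 + c * x.2.2 ^ 2) ∈ V) →
      (∀ x ∈ S, |x.1| ≤ X ∧ |x.2.1| ≤ X ∧ |x.2.2| ≤ X) →
      (#S : ℝ) ≤ C * (T : ℝ) ^ ε * (#V * (2 * X + 1)) := by
  obtain ⟨C, hC, card_le⟩ := exists_card_ternary_form_mem_le_of_binary_form_ne_zero hε
  refine ⟨9 + C, by positivity, fun {A B b c T X V S} hA hB hb hc hbT hcT hXT hform hX => ?_⟩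
  have one_le_T : 1 ≤ (T : ℝ) ^ ε := by
    refine Real.one_le_rpow ?_ hε.le
    exact_mod_cast (Int.one_le_abs hb).trans hbT
  have degenerate : #{x ∈ S | b * x.2.1 ^ 2 + c * x.2.2 ^ 2 = 0} ≤ 9 * (#V * (2 * X + 1)) := by
    refine card_le_of_binary_form_eq_zero (A := A) (b := b) hA hc (fun x hx => ?_)
      (fun x hx => (mem_filter.mp hx).2) fun x hx => (hX x (mem_filter.mp hx).1).2.1
    obtain ⟨hxS, h0⟩ := mem_filter.mp hx
    simpa only [h0, mul_zero, add_zero] using hform x hxS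
  have nondegenerate := card_le hB hb hc hbT hcT hXT
    (S := {x ∈ S | ¬ b * x.2.1 ^ 2 + c * x.2.2 ^ 2 = 0})
    (fun x hx => hform x (mem_filter.mp hx).1) (fun x hx => (mem_filter.mp hx).2)
    fun x hx => hX x (mem_filter.mp hx).1
  rw [← card_filter_add_card_filter_not (fun x => b * x.2.1 ^ 2 + c * x.2.2 ^ 2 = 0), Nat.cast_add]
  calc _ ≤ (9 * (#V * (2 * X + 1)) + C * (T : ℝ) ^ ε * (#V * (2 * X + 1)) : ℝ) :=
        add_le_add (by exact_mod_cast degenerate) nondegenerate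
    _ ≤ 9 * (T : ℝ) ^ ε * (#V * (2 * X + 1)) + C * (T : ℝ) ^ ε * (#V * (2 * X + 1)) := by
      gcongr
      exact le_mul_of_one_le_right (by norm_num) one_le_T
    _ = (9 + C) * (T : ℝ) ^ ε * (#V * (2 * X + 1)) := by ring

/-! ### Congruences with small denominators -/

section RationalApproximation

variable {q Q r : ℕ} {γ a : ℤ}

theorem abs_mul_sub_mul_le_div (hq : 0 < q) (hr : 0 < r)
    (h : |(γ : ℝ) / q - a / r| ≤ 1 / (r * Q)) : ((|γ * r - a * q| : ℤ) : ℝ) ≤ q / Q := by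
  have hq' : (0 : ℝ) < q := Nat.cast_pos.mpr hq
  have hr' : (0 : ℝ) < r := Nat.cast_pos.mpr hr
  calc ((|γ * r - a * q| : ℤ) : ℝ) = |q * r * ((γ : ℝ) / q - a / r)| := by
        push_cast
        congr 1
        field_simp
    _ = q * r * |(γ : ℝ) / q - a / r| := by rw [abs_mul, abs_of_pos (mul_pos hq' hr')]
    _ ≤ q * r * (1 / (r * Q)) := by gcongr
    _ = q / Q := by field_simp

theorem le_of_isCoprime_of_mul_sub_mul_eq_zero (hγ : IsCoprime γ q) (hr : 0 < r)
    (h : γ * r - a * q = 0) : q ≤ r :=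
  Nat.le_of_dvd hr <| Int.natCast_dvd_natCast.mp <| hγ.symm.dvd_of_dvd_mul_left
    ⟨a, by linear_combination h⟩

theorem exists_finset_dvd_abs_le (hq : 0 < q) {W : ℝ} (hW : 0 ≤ W) :
    ∃ V : Finset ℤ, (#V : ℝ) ≤ 2 * (W / q) + 1 ∧
      ∀ v : ℤ, (q : ℤ) ∣ v → ((|v| : ℤ) : ℝ) ≤ W → v ∈ V := by
  have hq' : (0 : ℝ) < q := Nat.cast_pos.mpr hq
  refine ⟨(Icc (-(⌊W / q⌋₊ : ℤ)) ⌊W / q⌋₊).image (q * ·), ?_, ?_⟩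
  · calc _ ≤ ((2 * ⌊W / q⌋₊ + 1 : ℕ) : ℝ) := by
          rw [← card_Icc_neg_natCast]
          exact_mod_cast card_image_le
      _ ≤ 2 * (W / q) + 1 := by
          push_cast
          gcongr
          exact Nat.floor_le (by positivity)
  · rintro _ ⟨k, rfl⟩ hk
    refine mem_image_of_mem _ (mem_Icc.mpr (abs_le.mp ?_))
    rw [Int.abs_eq_natAbs, Nat.cast_le]
    refine Nat.le_floor ((le_div_iff₀' hq').mpr ?_)
    rw [Nat.cast_natAbs]
    rwa [abs_mul, Nat.abs_cast, Int.cast_mul, Int.cast_natCast] at hk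

end RationalApproximation

theorem card_triples_le_of_abs_le {X : ℕ} {S : Finset (ℤ × ℤ × ℤ)}
    (hX : ∀ x ∈ S, |x.1| ≤ X ∧ |x.2.1| ≤ X ∧ |x.2.2| ≤ X) : #S ≤ (2 * X + 1) ^ 3 := by
  calc #S ≤ #(Icc (-(X : ℤ)) X ×ˢ Icc (-(X : ℤ)) X ×ˢ Icc (-(X : ℤ)) X) :=
        card_le_card fun x hx => by
          simpa only [mem_product, mem_Icc, ← abs_le] using hX x hx
    _ = (2 * X + 1) ^ 3 := by
        rw [card_product, card_product, card_Icc_neg_natCast]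
        ring

theorem dvd_cleared_form {q γ₁ γ₂ x y z : ℤ} (h : q ∣ γ₁ * x ^ 2 + γ₂ * y ^ 2 + z ^ 2)
    (a₁ a₂ r₁ r₂ : ℤ) :
    q ∣ r₂ * (γ₁ * r₁ - a₁ * q) * x ^ 2 + r₁ * ((γ₂ * r₂ - a₂ * q) * y ^ 2 + r₂ * z ^ 2) := by
  obtain ⟨k, hk⟩ := h
  exact ⟨r₁ * r₂ * k - r₂ * a₁ * x ^ 2 - r₁ * a₂ * y ^ 2, by linear_combination r₁ * r₂ * hk⟩

theorem abs_cleared_form_le {b₁ b₂ r₁ r₂ x y z B R X : ℝ} (hb₁ : |b₁| ≤ B) (hb₂ : |b₂| ≤ B)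
    (hr₁ : |r₁| ≤ R) (hr₂ : |r₂| ≤ R) (hx : |x| ≤ X) (hy : |y| ≤ X) (hz : |z| ≤ X) :
    |r₂ * b₁ * x ^ 2 + r₁ * (b₂ * y ^ 2 + r₂ * z ^ 2)| ≤ (R ^ 2 + 2 * R * B) * X ^ 2 := by
  have hR : 0 ≤ R := (abs_nonneg r₁).trans hr₁
  have hB : 0 ≤ B := (abs_nonneg b₁).trans hb₁
  calc |r₂ * b₁ * x ^ 2 + r₁ * (b₂ * y ^ 2 + r₂ * z ^ 2)|
      ≤ |r₂| * |b₁| * |x| ^ 2 + |r₁| * (|b₂| * |y| ^ 2 + |r₂| * |z| ^ 2) := by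
        simp only [← abs_pow, ← abs_mul]
        refine (abs_add_le _ _).trans (add_le_add_right ?_ _)
        rw [abs_mul]
        gcongr
        exact abs_add_le _ _
    _ ≤ R * B * X ^ 2 + R * (B * X ^ 2 + R * X ^ 2) := by gcongr
    _ = (R ^ 2 + 2 * R * B) * X ^ 2 := by ring

theorem two_mul_div_add_one_mul_le {R X q Q : ℝ} (hR : 0 ≤ R) (hX : 1 ≤ X) (hq : 0 < q)
    (hQ : 0 ≤ Q) :
    (2 * ((R ^ 2 + 2 * R * (q / Q)) * X ^ 2 / q) + 1) * (2 * X + 1) ≤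
      12 * (R ^ 2 * X ^ 3 / q + R * X ^ 3 / Q + X) := by
  have : 0 ≤ X := zero_le_one.trans hX
  calc (2 * ((R ^ 2 + 2 * R * (q / Q)) * X ^ 2 / q) + 1) * (2 * X + 1)
      ≤ (2 * ((R ^ 2 + 2 * R * (q / Q)) * X ^ 2 / q) + 1) * (2 * X + X) := by gcongr
    _ = 6 * (R ^ 2 * X ^ 3 / q) + 12 * (R * X ^ 3 / Q) + 3 * X := by
      rw [div_eq_mul_inv q Q]
      field_simp
      ring
    _ ≤ 12 * (R ^ 2 * X ^ 3 / q) + 12 * (R * X ^ 3 / Q) + 12 * X := by gcongr <;> norm_num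
    _ = 12 * (R ^ 2 * X ^ 3 / q + R * X ^ 3 / Q + X) := by ring

theorem exists_card_cleared_form_dvd_le {ε : ℝ} (hε : 0 < ε) :
    ∃ C : ℝ, 0 < C ∧ ∀ {q Q R X r₁ r₂ : ℕ} {b₁ b₂ : ℤ} {S : Finset (ℤ × ℤ × ℤ)},
      0 < q → 0 < Q → 0 < X → 0 < r₁ → 0 < r₂ → r₁ ≤ R → r₂ ≤ R → b₁ ≠ 0 → b₂ ≠ 0 →
      ((|b₁| : ℤ) : ℝ) ≤ q / Q → ((|b₂| : ℤ) : ℝ) ≤ q / Q →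
      (∀ x ∈ S, (q : ℤ) ∣ r₂ * b₁ * x.1 ^ 2 + r₁ * (b₂ * x.2.1 ^ 2 + r₂ * x.2.2 ^ 2)) →
      (∀ x ∈ S, |x.1| ≤ X ∧ |x.2.1| ≤ X ∧ |x.2.2| ≤ X) →
      (#S : ℝ) ≤
        C * ((R : ℝ) ^ 2 * X ^ 3 / q + R * X ^ 3 / Q + X) * ((R : ℝ) * X * q) ^ ε := by
  obtain ⟨C, hC, card_le⟩ := exists_card_ternary_form_mem_le hε
  refine ⟨12 * C, by positivity, fun {q Q R X r₁ r₂ b₁ b₂ S} hq hQ hX hr₁ hr₂ hr₁R hr₂R hb₁ hb₂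
    hb₁q hb₂q hdvd hS => ?_⟩
  have hR : 0 < R := hr₁.trans_le hr₁R
  have hr₁0 : (r₁ : ℤ) ≠ 0 := by exact_mod_cast hr₁.ne'
  have hr₂0 : (r₂ : ℤ) ≠ 0 := by exact_mod_cast hr₂.ne'
  have hT : 0 < R * X * q := by positivity
  have hb₂T : |b₂| ≤ ((R * X * q : ℕ) : ℤ) := by
    have hb₂q' : ((|b₂| : ℤ) : ℝ) ≤ q :=
      hb₂q.trans (div_le_self q.cast_nonneg (Nat.one_le_cast.mpr hQ))
    have hqT : q ≤ R * X * q := Nat.le_of_dvd hT (dvd_mul_left ..)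
    exact (show |b₂| ≤ (q : ℤ) by exact_mod_cast hb₂q').trans (by exact_mod_cast hqT)
  have hr₂T : |(r₂ : ℤ)| ≤ ((R * X * q : ℕ) : ℤ) := by
    rw [Nat.abs_cast]
    exact_mod_cast hr₂R.trans (Nat.le_of_dvd hT ⟨X * q, mul_assoc ..⟩)
  have hXT : X ≤ R * X * q := Nat.le_of_dvd hT ⟨R * q, by ring⟩
  obtain ⟨V, card_V_le, mem_V⟩ := exists_finset_dvd_abs_le hq
    (W := ((R : ℝ) ^ 2 + 2 * R * (q / Q)) * X ^ 2) (by positivity)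
  have form_mem (x : ℤ × ℤ × ℤ) (hx : x ∈ S) :
      r₂ * b₁ * x.1 ^ 2 + r₁ * (b₂ * x.2.1 ^ 2 + r₂ * x.2.2 ^ 2) ∈ V := by
    refine mem_V _ (hdvd x hx) ?_
    have cast_le {y : ℤ} (hy : |y| ≤ X) : |(y : ℝ)| ≤ X := by exact_mod_cast hy
    push_cast at hb₁q hb₂q ⊢
    exact abs_cleared_form_le hb₁q hb₂q (by simpa) (by simpa) (cast_le (hS x hx).1)
      (cast_le (hS x hx).2.1) (cast_le (hS x hx).2.2)
  calc (#S : ℝ) ≤ C * ((R * X * q : ℕ) : ℝ) ^ ε * (#V * (2 * X + 1)) :=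
        card_le (mul_ne_zero hr₂0 hb₁) hr₁0 hb₂ hr₂0 hb₂T hr₂T hXT form_mem hS
    _ ≤ C * ((R * X * q : ℕ) : ℝ) ^ ε *
          (12 * ((R : ℝ) ^ 2 * X ^ 3 / q + R * X ^ 3 / Q + X)) := by
      refine mul_le_mul_of_nonneg_left ?_ (by positivity)
      exact (mul_le_mul_of_nonneg_right card_V_le (by positivity)).trans
        (two_mul_div_add_one_mul_le R.cast_nonneg (Nat.one_le_cast.mpr hX)
          (Nat.cast_pos.mpr hq) Q.cast_nonneg)
    _ = _ := by
      push_cast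
      ring

theorem card_triples_le_of_modulus_le {ε : ℝ} (hε : 0 ≤ ε) {q Q R X : ℕ}
    {S : Finset (ℤ × ℤ × ℤ)} (hq : 0 < q) (hX : 0 < X) (hqR : q ≤ R)
    (hS : ∀ x ∈ S, |x.1| ≤ X ∧ |x.2.1| ≤ X ∧ |x.2.2| ≤ X) :
    (#S : ℝ) ≤
      27 * ((R : ℝ) ^ 2 * X ^ 3 / q + R * X ^ 3 / Q + X) * ((R : ℝ) * X * q) ^ ε := by
  have hR : 0 < R := hq.trans_le hqR
  have hq' : (0 : ℝ) < q := Nat.cast_pos.mpr hq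
  have one_le_X : (1 : ℝ) ≤ X := Nat.one_le_cast.mpr hX
  have one_le_R_sq_div : 1 ≤ (R : ℝ) ^ 2 / q := by
    rw [one_le_div hq']
    exact_mod_cast hqR.trans (Nat.le_self_pow two_ne_zero R)
  have one_le_rpow : 1 ≤ ((R : ℝ) * X * q) ^ ε := by
    refine Real.one_le_rpow ?_ hε
    exact_mod_cast (show 0 < R * X * q by positivity)
  calc (#S : ℝ) ≤ (2 * X + 1) ^ 3 := by exact_mod_cast card_triples_le_of_abs_le hS
    _ ≤ (2 * X + X) ^ 3 := by gcongr
    _ = 27 * (1 * X ^ 3) := by ring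
    _ ≤ 27 * ((R : ℝ) ^ 2 / q * X ^ 3) := by gcongr
    _ ≤ 27 * ((R : ℝ) ^ 2 * X ^ 3 / q + (R * X ^ 3 / Q + X)) := by
      rw [div_mul_eq_mul_div]
      gcongr
      exact le_add_of_nonneg_right (by positivity)
    _ = 27 * ((R : ℝ) ^ 2 * X ^ 3 / q + R * X ^ 3 / Q + X) * 1 := by ring
    _ ≤ 27 * ((R : ℝ) ^ 2 * X ^ 3 / q + R * X ^ 3 / Q + X) * ((R : ℝ) * X * q) ^ ε := by gcongr

theorem exists_card_dvd_form_le {ε : ℝ} (hε : 0 < ε) :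
    ∃ C : ℝ, 0 < C ∧ ∀ {q Q R X r₁ r₂ : ℕ} {γ₁ γ₂ a₁ a₂ : ℤ} {S : Finset (ℤ × ℤ × ℤ)},
      0 < q → 0 < Q → 0 < X → IsCoprime γ₁ q → IsCoprime γ₂ q →
      0 < r₁ → 0 < r₂ → r₁ ≤ R → r₂ ≤ R →
      |(γ₁ : ℝ) / q - a₁ / r₁| ≤ 1 / (r₁ * Q) → |(γ₂ : ℝ) / q - a₂ / r₂| ≤ 1 / (r₂ * Q) →
      (∀ x ∈ S, (q : ℤ) ∣ γ₁ * x.1 ^ 2 + γ₂ * x.2.1 ^ 2 + x.2.2 ^ 2) →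
      (∀ x ∈ S, |x.1| ≤ X ∧ |x.2.1| ≤ X ∧ |x.2.2| ≤ X) →
      (#S : ℝ) ≤
        C * ((R : ℝ) ^ 2 * X ^ 3 / q + R * X ^ 3 / Q + X) * ((R : ℝ) * X * q) ^ ε := by
  obtain ⟨C, hC, card_le⟩ := exists_card_cleared_form_dvd_le hε
  refine ⟨27 + C, by positivity, fun {q Q R X r₁ r₂ γ₁ γ₂ a₁ a₂ S} hq hQ hX hγ₁ hγ₂ hr₁ hr₂ hr₁R
    hr₂R h₁ h₂ hdvd hS => ?_⟩
  by_cases hb : γ₁ * r₁ - a₁ * q ≠ 0 ∧ γ₂ * r₂ - a₂ * q ≠ 0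
  · refine (card_le hq hQ hX hr₁ hr₂ hr₁R hr₂R hb.1 hb.2 (abs_mul_sub_mul_le_div hq hr₁ h₁)
      (abs_mul_sub_mul_le_div hq hr₂ h₂) (fun x hx => dvd_cleared_form (hdvd x hx) ..) hS).trans ?_
    gcongr
    linarith
  · have hqR : q ≤ R := by
      rcases not_and_or.mp hb with h | h
      · exact (le_of_isCoprime_of_mul_sub_mul_eq_zero hγ₁ hr₁ (not_not.mp h)).trans hr₁R
      · exact (le_of_isCoprime_of_mul_sub_mul_eq_zero hγ₂ hr₂ (not_not.mp h)).trans hr₂R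
    refine (card_triples_le_of_modulus_le (Q := Q) hε.le hq hX hqR hS).trans ?_
    gcongr
    linarith

theorem exists_finset_card_eq_sigmaCount (p : ℕ) (β₁ β₂ β₃ : ℤ) {M : ℝ} (hM : 0 ≤ M) (q : ℕ) :
    ∃ S : Finset (ℤ × ℤ × ℤ), #S = sigmaCount p β₁ β₂ β₃ M q ∧
      (∀ x ∈ S, |x.1| ≤ ⌊M⌋₊ ∧ |x.2.1| ≤ ⌊M⌋₊ ∧ |x.2.2| ≤ ⌊M⌋₊) ∧
      ∀ x ∈ S, (q : ℤ) ∣ β₁ * x.1 ^ 2 + β₂ * x.2.1 ^ 2 + β₃ * x.2.2 ^ 2 := by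
  set A : Set (ℤ × ℤ × ℤ) := {x | ((|x.1| : ℤ) : ℝ) ≤ M ∧ ((|x.2.1| : ℤ) : ℝ) ≤ M ∧
    ((|x.2.2| : ℤ) : ℝ) ≤ M ∧ ¬ (p : ℤ) ∣ x.1 * x.2.1 * x.2.2 ∧
    (q : ℤ) ∣ β₁ * x.1 ^ 2 + β₂ * x.2.1 ^ 2 + β₃ * x.2.2 ^ 2} with hA
  have le_floor {y : ℤ} (hy : ((|y| : ℤ) : ℝ) ≤ M) : |y| ≤ ⌊M⌋₊ := by
    rw [Int.natCast_floor_eq_floor hM]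
    exact Int.le_floor.mpr hy
  have bounded (x : ℤ × ℤ × ℤ) (hx : x ∈ A) : |x.1| ≤ ⌊M⌋₊ ∧ |x.2.1| ≤ ⌊M⌋₊ ∧ |x.2.2| ≤ ⌊M⌋₊ :=
    ⟨le_floor hx.1, le_floor hx.2.1, le_floor hx.2.2.1⟩
  have finite_A : A.Finite := by
    let I : Finset ℤ := Icc (-(⌊M⌋₊ : ℤ)) ⌊M⌋₊
    refine (I ×ˢ I ×ˢ I).finite_toSet.subset fun x hx => ?_
    simpa only [I, mem_coe, mem_product, mem_Icc, ← abs_le] using bounded x hx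
  refine ⟨finite_A.toFinset, ?_, fun x hx => bounded x (finite_A.mem_toFinset.mp hx),
    fun x hx => (finite_A.mem_toFinset.mp hx).2.2.2.2⟩
  rw [sigmaCount, ← hA, Nat.card_coe_set_eq, Set.ncard_eq_toFinset_card A finite_A]

theorem dvd_form_of_dvd_mul_sub {q β₁ β₂ β₃ γ₁ γ₂ x y z : ℤ} (hβ₃ : IsCoprime q β₃)
    (h₁ : q ∣ γ₁ * β₃ - β₁) (h₂ : q ∣ γ₂ * β₃ - β₂)
    (h : q ∣ β₁ * x ^ 2 + β₂ * y ^ 2 + β₃ * z ^ 2) : q ∣ γ₁ * x ^ 2 + γ₂ * y ^ 2 + z ^ 2 := by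
  refine hβ₃.dvd_of_dvd_mul_left ?_
  convert dvd_add h (dvd_add (h₁.mul_right (x ^ 2)) (h₂.mul_right (y ^ 2))) using 1
  ring

theorem isCoprime_of_dvd_sub {q β m : ℤ} (hβ : IsCoprime β q) (h : q ∣ m - β) :
    IsCoprime m q := by
  obtain ⟨k, hk⟩ := h
  rw [sub_eq_iff_eq_add'.mp hk]
  exact hβ.add_mul_left_left k

theorem sigma_bound_small_denominators_general (ε : ℝ) (hε : 0 < ε) :
    ∃ Cε : ℝ, 0 < Cε ∧
      ∀ (p q : ℕ), 0 < q → ∀ (β₁ β₂ β₃ : ℤ), IsCoprime β₁ q → IsCoprime β₂ q →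
        ∀ M : ℝ, 1 ≤ M → ∀ Q R : ℕ, 0 < Q →
        ∀ γ₁ γ₂ : ℤ, ((q : ℤ) ∣ γ₁ * β₃ - β₁) → ((q : ℤ) ∣ γ₂ * β₃ - β₂) →
        ∀ (a₁ a₂ : ℤ) (r₁ r₂ : ℕ), 0 < r₁ → 0 < r₂ → r₁ ≤ R → r₂ ≤ R →
          |(γ₁ : ℝ) / q - (a₁ : ℝ) / (r₁ : ℝ)| ≤ 1 / ((r₁ : ℝ) * (Q : ℝ)) →
          |(γ₂ : ℝ) / q - (a₂ : ℝ) / (r₂ : ℝ)| ≤ 1 / ((r₂ : ℝ) * (Q : ℝ)) →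
          (sigmaCount p β₁ β₂ β₃ M q : ℝ) ≤
            Cε * ((R : ℝ) ^ 2 * M ^ 3 / q + (R : ℝ) * M ^ 3 / (Q : ℝ) + M) *
              ((R : ℝ) * M * q) ^ ε := by
  obtain ⟨C, hC, card_le⟩ := exists_card_dvd_form_le hε
  refine ⟨C, hC, fun p q hq β₁ β₂ β₃ hβ₁ hβ₂ M hM Q R hQ γ₁ γ₂ hγ₁ hγ₂ a₁ a₂ r₁ r₂ hr₁ hr₂ hr₁R
    hr₂R h₁ h₂ => ?_⟩
  have hM0 : 0 ≤ M := zero_le_one.trans hM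
  have cop₁ : IsCoprime (γ₁ * β₃) q := isCoprime_of_dvd_sub hβ₁ hγ₁
  have cop₂ : IsCoprime (γ₂ * β₃) q := isCoprime_of_dvd_sub hβ₂ hγ₂
  obtain ⟨S, hcard, hS, hdvd⟩ := exists_finset_card_eq_sigmaCount p β₁ β₂ β₃ hM0 q
  rw [← hcard]
  calc (#S : ℝ) ≤ C * ((R : ℝ) ^ 2 * ⌊M⌋₊ ^ 3 / q + R * ⌊M⌋₊ ^ 3 / Q + ⌊M⌋₊)
        * ((R : ℝ) * ⌊M⌋₊ * q) ^ ε :=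
      card_le hq hQ (Nat.floor_pos.mpr hM) cop₁.of_mul_left_left cop₂.of_mul_left_left hr₁ hr₂
        hr₁R hr₂R h₁ h₂ (fun x hx => dvd_form_of_dvd_mul_sub cop₁.of_mul_left_right.symm hγ₁ hγ₂
          (hdvd x hx)) hS
    _ ≤ C * ((R : ℝ) ^ 2 * M ^ 3 / q + (R : ℝ) * M ^ 3 / (Q : ℝ) + M) *
          ((R : ℝ) * M * q) ^ ε := by
      have := Nat.floor_le hM0
      gcongr

theorem isCoprime_natCast_prime_pow {p : ℕ} (hp : p.Prime) {β : ℤ} (hβ : ¬ (p : ℤ) ∣ β) (n : ℕ) :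
    IsCoprime β ((p ^ n : ℕ) : ℤ) := by
  rw [Nat.cast_pow]
  exact ((Nat.prime_iff_prime_int.mp hp).coprime_iff_not_dvd.mpr hβ).symm.pow_right

/-- A bound for `Σ_{β₁,β₂,β₃}(M,q)` when both `β₁β₃⁻¹/q` and `β₂β₃⁻¹/q`
admit rational approximations with small denominators `r_i ≤ R` of quality `1/(r_i Q)`. -/
theorem sigma_bound_small_denominators (ε : ℝ) (hε : 0 < ε) :
    ∃ Cε : ℝ, 0 < Cε ∧
      ∀ (p : ℕ), p.Prime → Odd p → ∀ (n : ℕ), 1 ≤ n → ∀ (β₁ β₂ β₃ : ℤ),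
        ¬ (p : ℤ) ∣ β₁ → ¬ (p : ℤ) ∣ β₂ → ¬ (p : ℤ) ∣ β₃ →
        ∀ M : ℝ, 1 ≤ M → M ≤ ((p : ℝ) ^ n) ^ ((1 : ℝ) / 2 - ε) →
        ∀ Q R : ℕ, 0 < Q → 0 < R →
        ∀ γ₁ γ₂ : ℤ, ((p : ℤ) ^ n ∣ γ₁ * β₃ - β₁) → ((p : ℤ) ^ n ∣ γ₂ * β₃ - β₂) →
        ∀ (a₁ a₂ : ℤ) (r₁ r₂ : ℕ), 0 < r₁ → 0 < r₂ → r₁ ≤ R → r₂ ≤ R →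
          Int.gcd a₁ r₁ = 1 → Int.gcd a₂ r₂ = 1 →
          |(γ₁ : ℝ) / (p : ℝ) ^ n - (a₁ : ℝ) / (r₁ : ℝ)| ≤ 1 / ((r₁ : ℝ) * (Q : ℝ)) →
          |(γ₂ : ℝ) / (p : ℝ) ^ n - (a₂ : ℝ) / (r₂ : ℝ)| ≤ 1 / ((r₂ : ℝ) * (Q : ℝ)) →
          (sigmaCount p β₁ β₂ β₃ M (p ^ n) : ℝ) ≤
            Cε * ((R : ℝ) ^ 2 * M ^ 3 / (p : ℝ) ^ n + (R : ℝ) * M ^ 3 / (Q : ℝ) + M) *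
              ((R : ℝ) * M * (p : ℝ) ^ n) ^ ε := by
  obtain ⟨C, hC, sigma_le⟩ := sigma_bound_small_denominators_general ε hε
  refine ⟨C, hC, fun p hp _ n _ β₁ β₂ β₃ hβ₁ hβ₂ _ M hM _ Q R hQ _ γ₁ γ₂ hγ₁ hγ₂ a₁ a₂ r₁ r₂
    hr₁ hr₂ hr₁R hr₂R _ _ h₁ h₂ => ?_⟩
  rw [← Nat.cast_pow p n] at hγ₁ hγ₂ h₁ h₂ ⊢
  exact sigma_le p (p ^ n) (pow_pos hp.pos n) β₁ β₂ β₃ (isCoprime_natCast_prime_pow hp hβ₁ n)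
    (isCoprime_natCast_prime_pow hp hβ₂ n) M hM Q R hQ γ₁ γ₂ hγ₁ hγ₂ a₁ a₂ r₁ r₂ hr₁ hr₂ hr₁R hr₂R
    h₁ h₂
end

section
/- For every ε > 0 there exists a constant C(ε) > 0 with the following property: for every odd prime p, every integer n ≥ 1 with q := pⁿ, all integers β₁, β₂, β₃ coprime to p, and every real M with 1 ≤ M ≤ q^{1/2−ε}, one has Σ_{β₁,β₂,β₃}(M,q) ≤ C(ε) · (M^{5/2}q^{−1/2} + M^{9/5}q^{−1/5} + M) · q^ε. -/
/-!
For fixed `x₃`, the points `(x₁², x₂²)` of the solutions lie in one coset of the lattice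
`β₁ a + β₂ b ≡ 0 (mod q)`, of determinant `q`. Let `v` be a shortest vector of this lattice and take
`M` integral; there are two ways to count.

* The points lie on `O(‖v‖ M² / q + 1)` lines of direction `v`. A line missing the origin meets the
  squares in the solutions of a binary equation `A y² - B x² = w`, of which there are `O(q^ε)` by
  the theory of the Pell equation, and the line through the origin contributes `O(M)` in total.
  Summing over `x₃` gives `M q^ε` as soon as `‖v‖ M² ≤ q`.
* By Cauchy–Schwarz over `x₃`, the square of the count is at most `M` times the number of pairs of
  solutions with equal `x₃`. The difference of the two points of such a pair is a lattice vector of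
  norm at most `M²`; it has `O(M⁴ / q)` possible values when `‖v‖ M² > q`, and for `x ≠ y` it
  determines the pair up to `q^ε` choices, by factoring `x₁² - y₁²` and `x₂² - y₂²`. This gives
  `M^{5/2} q^{-1/2} q^ε + M`.
-/

open Finset

/-! ### Counting divisors and separated points -/

theorem natCast_add_one_le_mul_pow {K c : ℝ} (hK : 1 ≤ K) (hKc : 1 ≤ K * (c - 1)) (e : ℕ) :
    (e + 1 : ℝ) ≤ K * c ^ e := by
  have hc : 0 < c - 1 := by by_contra! h; nlinarith
  have bernoulli : 1 + e * (c - 1) ≤ c ^ e := by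
    simpa using one_add_mul_le_pow (show -2 ≤ c - 1 by linarith) e
  calc (e + 1 : ℝ) ≤ e * (K * (c - 1)) + K := by
        gcongr
        exact le_mul_of_one_le_right (by positivity) hKc
    _ = K * (1 + e * (c - 1)) := by ring
    _ ≤ K * c ^ e := by gcongr

theorem exists_add_one_le_mul_rpow {δ : ℝ} (hδ : 0 < δ) :
    ∃ (K : ℝ) (B : ℕ), 1 ≤ K ∧ ∀ p e : ℕ, 2 ≤ p →
      ((e + 1 : ℕ) : ℝ) ≤ (if p < B then K else 1) * ((p ^ e : ℕ) : ℝ) ^ δ := by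
  have hgap : 0 < (2 : ℝ) ^ δ - 1 := sub_pos.2 (Real.one_lt_rpow one_lt_two hδ)
  set K : ℝ := max 1 (1 / ((2 : ℝ) ^ δ - 1))
  have hK : 1 ≤ K := le_max_left _ _
  refine ⟨K, ⌈(2 : ℝ) ^ (1 / δ)⌉₊, hK, fun p e hp => ?_⟩
  have hpow : ((p ^ e : ℕ) : ℝ) ^ δ = ((p : ℝ) ^ δ) ^ e := by
    rw [Nat.cast_pow, ← Real.rpow_natCast_mul (by positivity), mul_comm,
      Real.rpow_mul_natCast (by positivity)]
  rw [hpow, Nat.cast_succ]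
  refine natCast_add_one_le_mul_pow (by split_ifs <;> linarith) ?_ e
  split_ifs with hpB
  · calc 1 ≤ K * ((2 : ℝ) ^ δ - 1) := (div_le_iff₀ hgap).1 (le_max_right _ _)
      _ ≤ K * ((p : ℝ) ^ δ - 1) := by gcongr; exact_mod_cast hp
  · have hroot : (2 : ℝ) ^ (1 / δ) ≤ p := (Nat.le_ceil _).trans (mod_cast not_lt.1 hpB)
    have hlarge : (2 : ℝ) ≤ (p : ℝ) ^ δ := by
      rwa [one_div, Real.rpow_inv_le_iff_of_pos two_pos.le (by positivity) hδ] at hroot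
    linarith

theorem exists_card_divisors_le_mul_rpow {δ : ℝ} (hδ : 0 < δ) :
    ∃ C : ℝ, 0 < C ∧ ∀ n : ℕ, (#n.divisors : ℝ) ≤ C * (n : ℝ) ^ δ := by
  obtain ⟨K, B, hK, hlocal⟩ := exists_add_one_le_mul_rpow hδ
  refine ⟨K ^ B, by positivity, fun n => ?_⟩
  rcases eq_or_ne n 0 with rfl | hn
  · simp only [Nat.divisors_zero, card_empty, Nat.cast_zero, Real.zero_rpow hδ.ne', mul_zero,
      le_refl]
  have hfactor : (n : ℝ) ^ δ = ∏ p ∈ n.primeFactors, ((p ^ n.factorization p : ℕ) : ℝ) ^ δ := by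
    rw [Real.finsetProd_rpow _ _ (fun _ _ => by positivity), ← Nat.cast_prod]
    exact congrArg (fun k : ℕ => (k : ℝ) ^ δ) (Nat.prod_factorization_pow_eq_self hn).symm
  have hsmall : #{p ∈ n.primeFactors | p < B} ≤ B :=
    (card_le_card fun p hp => mem_range.2 (mem_filter.1 hp).2).trans_eq (card_range B)
  calc (#n.divisors : ℝ) = ∏ p ∈ n.primeFactors, ((n.factorization p + 1 : ℕ) : ℝ) := by
        rw [Nat.card_divisors hn, Nat.cast_prod]
    _ ≤ ∏ p ∈ n.primeFactors,
          (if p < B then K else 1) * ((p ^ n.factorization p : ℕ) : ℝ) ^ δ :=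
        prod_le_prod (fun _ _ => by positivity) fun p hp =>
          hlocal p _ (Nat.prime_of_mem_primeFactors hp).two_le
    _ = K ^ #{p ∈ n.primeFactors | p < B} * (n : ℝ) ^ δ := by
        rw [prod_mul_distrib, prod_ite, prod_const, prod_const_one, mul_one, hfactor]
    _ ≤ K ^ B * (n : ℝ) ^ δ := by gcongr

theorem card_le_natLog_add_one_of_dyadic {ι : Type*} {T : Finset ι} {f : ι → ℝ} {N : ℕ}
    (hf : ∀ a ∈ T, 1 ≤ f a ∧ f a ≤ N)
    (hsep : ∀ a ∈ T, ∀ b ∈ T, f a ≤ f b → f b < 2 * f a → a = b) :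
    #T ≤ Nat.log 2 N + 1 := by
  set k : ι → ℕ := fun a => Nat.log 2 ⌊f a⌋₊
  have hpow_le : ∀ a ∈ T, (2 : ℝ) ^ k a ≤ f a := fun a ha => by
    have hfloor : ⌊f a⌋₊ ≠ 0 := (Nat.floor_pos.2 (hf a ha).1).ne'
    exact (mod_cast Nat.pow_log_le_self 2 hfloor : (2 : ℝ) ^ k a ≤ ⌊f a⌋₊).trans
      (Nat.floor_le (by linarith [hf a ha]))
  have hlt_pow : ∀ a, f a < 2 * 2 ^ k a := fun a => by
    rw [← pow_succ']
    exact_mod_cast Nat.lt_of_floor_lt (Nat.lt_pow_succ_log_self one_lt_two ⌊f a⌋₊)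
  rw [← card_range (Nat.log 2 N + 1)]
  refine card_le_card_of_injOn k (fun a ha => ?_) fun a ha b hb hab => ?_
  · exact mem_coe.2 <| mem_range.2 <| Nat.lt_succ_of_le <|
      Nat.log_mono_right (Nat.floor_le_of_le (hf a ha).2)
  · have ha_lt := hlt_pow a
    have hb_lt := hlt_pow b
    rw [hab] at ha_lt
    rw [← hab] at hb_lt
    rcases le_total (f a) (f b) with h | h
    · exact hsep a ha b hb h (by linarith [hpow_le a ha])
    · exact (hsep b hb a ha h (by linarith [hpow_le b hb])).symm

/-! ### Pell equations -/

theorem dvd_two_of_sq_dvd_four_mul {D d : ℤ} (hD : Squarefree D) (hd : d ^ 2 ∣ 4 * D) :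
    d ∣ 2 := by
  rcases Int.even_or_odd' d with ⟨k, rfl | rfl⟩
  · have hk : k * k ∣ D := by
      rwa [mul_pow, show (2 : ℤ) ^ 2 = 4 by norm_num, sq,
        mul_dvd_mul_iff_left (by norm_num : (4 : ℤ) ≠ 0)] at hd
    simpa using mul_dvd_mul_left 2 ((hD k hk).dvd : k ∣ 1)
  · have hodd : IsCoprime ((2 * k + 1) ^ 2) (2 ^ 2) := IsCoprime.pow ⟨1, -k, by ring⟩
    exact (hD _ (by simpa only [sq] using hodd.dvd_of_dvd_mul_left hd)).dvd

theorem dvd_add_of_dvd_sq_sub_sq {n m x y : ℤ} (hn : n ≠ 0) (hxy : n ∣ x ^ 2 - y ^ 2)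
    (hm : n = m * Int.gcd (x - y) n) : m ∣ x + y := by
  obtain ⟨k, m', hkm, hk, hm'⟩ := Int.exists_gcd_one (Int.gcd_pos_of_ne_zero_right (x - y) hn)
  have hg : (Int.gcd (x - y) n : ℤ) ≠ 0 := right_ne_zero_of_mul (hm ▸ hn)
  obtain rfl : m = m' := mul_right_cancel₀ hg (hm.symm.trans hm')
  refine (Int.isCoprime_iff_gcd_eq_one.2 hkm).symm.dvd_of_dvd_mul_left ?_
  refine (mul_dvd_mul_iff_right hg).1 ?_
  rwa [← hm, mul_right_comm, ← hk, mul_comm, ← sq_sub_sq]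

-- Up to a factor of at most `2` in the modulus, a root `s` of `X² ≡ D (mod n)` is determined by
-- `gcd(s - u, n)` for a fixed root `u`, so it takes at most `τ(n)` values.
theorem dvd_two_mul_sub_of_gcd_eq {D n s t u : ℤ} (hD : Squarefree D) (hn : n ≠ 0)
    (hs : n ∣ s ^ 2 - D) (ht : n ∣ t ^ 2 - D) (hu : n ∣ u ^ 2 - D)
    (hst : Int.gcd (s - u) n = Int.gcd (t - u) n) : n ∣ 2 * (s - t) := by
  set g : ℤ := (Int.gcd (s - u) n : ℤ) with hg
  have hgt : g = Int.gcd (t - u) n := by rw [hg, hst]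
  obtain ⟨m, hm⟩ : g ∣ n := Int.gcd_dvd_right ..
  rw [mul_comm] at hm
  have hms : m ∣ s + u := dvd_add_of_dvd_sq_sub_sq hn (by simpa using dvd_sub hs hu) hm
  have hmt : m ∣ t + u := dvd_add_of_dvd_sq_sub_sq hn (by simpa using dvd_sub ht hu) (hgt ▸ hm)
  have hgsu : g ∣ s - u := Int.gcd_dvd_left ..
  have hg_sub : g ∣ s - t := by
    simpa using dvd_sub hgsu (hgt ▸ Int.gcd_dvd_left .. : g ∣ t - u)
  have hm_sub : m ∣ s - t := by simpa using dvd_sub hms hmt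
  have hd : (Int.gcd m g : ℤ) ∣ 2 := by
    refine dvd_two_of_sq_dvd_four_mul hD ?_
    have hdn : (Int.gcd m g : ℤ) ^ 2 ∣ n := by
      rw [hm, sq]
      exact mul_dvd_mul (Int.gcd_dvd_left ..) (Int.gcd_dvd_right ..)
    have hdu : (Int.gcd m g : ℤ) ∣ 2 * u := by
      have := dvd_sub ((Int.gcd_dvd_left ..).trans hms) ((Int.gcd_dvd_right ..).trans hgsu)
      rwa [add_sub_sub_cancel, ← two_mul] at this
    have := dvd_sub (pow_dvd_pow_of_dvd hdu 2) ((hdn.trans hu).mul_left 4)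
    rwa [show (2 * u) ^ 2 - 4 * (u ^ 2 - D) = 4 * D by ring] at this
  obtain ⟨y, hy⟩ := hm_sub
  obtain ⟨z, hz⟩ := hg_sub
  have hbezout : n ∣ (Int.gcd m g : ℤ) * (s - t) :=
    ⟨Int.gcdA m g * z + Int.gcdB m g * y, by
      rw [hm, Int.gcd_eq_gcd_ab]
      linear_combination m * Int.gcdA m g * hz + g * Int.gcdB m g * hy⟩
  exact hbezout.trans (mul_dvd_mul_right hd _)

/-- The determinant of the pair `u`, `v`; it measures how far `v` is from the line through `u`, and
its divisibility by a modulus says that `u` and `v` are proportional modulo it. -/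
def cross (u v : ℤ × ℤ) : ℤ := u.1 * v.2 - u.2 * v.1

-- `(U + V√D) / 2` is the quotient of `b.1 + b.2√D` by `a.1 + a.2√D`.
theorem exists_pell_unit {D n : ℤ} {a b : ℤ × ℤ} (hn : n ≠ 0) (ha : a.1 ^ 2 - D * a.2 ^ 2 = n)
    (hb : b.1 ^ 2 - D * b.2 ^ 2 = n) (hab : n ∣ 2 * cross a b) :
    ∃ U V : ℤ, U ^ 2 - D * V ^ 2 = 4 ∧
      2 * b.1 = a.1 * U + D * a.2 * V ∧ 2 * b.2 = a.1 * V + a.2 * U := by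
  obtain ⟨V, hV⟩ := hab
  rw [cross] at hV
  have hsq : (2 * (a.1 * b.1 - D * a.2 * b.2)) ^ 2 = n ^ 2 * (4 + D * V ^ 2) := by
    linear_combination 4 * (b.1 ^ 2 - D * b.2 ^ 2) * ha + 4 * n * hb
      + D * (2 * (a.1 * b.2 - a.2 * b.1) + n * V) * hV
  obtain ⟨U, hU⟩ := (Int.pow_dvd_pow_iff two_ne_zero).1 (Dvd.intro _ hsq.symm)
  refine ⟨U, V, ?_, mul_left_cancel₀ hn ?_, mul_left_cancel₀ hn ?_⟩
  · rw [hU, mul_pow] at hsq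
    linarith [mul_left_cancel₀ (pow_ne_zero 2 hn) hsq]
  · linear_combination a.1 * hU + D * a.2 * hV - 2 * b.1 * ha
  · linear_combination a.1 * hV + a.2 * hU - 2 * b.2 * ha

theorem card_le_of_dvd_two_mul_cross_of_neg {D n : ℤ} (hD : D < 0) (hn : n ≠ 0) {T : Finset (ℤ × ℤ)}
    (hT : ∀ a ∈ T, a.1 ^ 2 - D * a.2 ^ 2 = n)
    (hclass : ∀ a ∈ T, ∀ b ∈ T, n ∣ 2 * cross a b) : #T ≤ 25 := by
  rcases T.eq_empty_or_nonempty with rfl | ⟨a, ha⟩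
  · exact Nat.zero_le _
  choose! U V hUV h₁ h₂ using fun b hb =>
    exists_pell_unit hn (hT a ha) (hT b hb) (hclass a ha b hb)
  have hbox : #(Icc (-2 : ℤ) 2 ×ˢ Icc (-2 : ℤ) 2) = 25 := by simp
  rw [← hbox]
  refine card_le_card_of_injOn (fun b => (U b, V b)) (fun b hb => ?_) fun b hb c hc hbc => ?_
  · simp only [coe_product, coe_Icc, Set.mem_prod, Set.mem_Icc]
    have := hUV b hb
    exact ⟨abs_le.1 (abs_le_of_sq_le_sq (by nlinarith) zero_le_two),
      abs_le.1 (abs_le_of_sq_le_sq (by nlinarith) zero_le_two)⟩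
  · obtain ⟨hU, hV⟩ := Prod.mk.inj hbc
    have hb₁ := h₁ b hb
    have hb₂ := h₂ b hb
    rw [hU, hV] at hb₁ hb₂
    exact Prod.ext (by linarith [h₁ c hc]) (by linarith [h₂ c hc])

/-- The solutions `(X, Z)` of the generalised Pell equation `X² - D Z² = n` with
`0 ≤ X, Z ≤ R`. -/
noncomputable def pellBox (D n : ℤ) (R : ℕ) : Finset (ℤ × ℤ) :=
  {a ∈ Icc 0 (R : ℤ) ×ˢ Icc 0 (R : ℤ) | a.1 ^ 2 - D * a.2 ^ 2 = n}

theorem mem_pellBox {D n : ℤ} {R : ℕ} {a : ℤ × ℤ} :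
    a ∈ pellBox D n R ↔
      ((0 ≤ a.1 ∧ a.1 ≤ R) ∧ 0 ≤ a.2 ∧ a.2 ≤ R) ∧ a.1 ^ 2 - D * a.2 ^ 2 = n := by
  simp only [pellBox, mem_filter, mem_product, mem_Icc]

-- With `t = U + V r` one has `U = (t + 4 / t) / 2`, which lies in `[2, 5/2]` for `t ∈ [2, 4)`.
theorem eq_two_and_eq_zero_of_pell_unit {U V : ℤ} {r : ℝ} (hr : 1 ≤ r)
    (hUV : ((U : ℝ) + V * r) * (U - V * r) = 4) (hlow : 2 ≤ U + V * r) (hupp : U + V * r < 4) :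
    U = 2 ∧ V = 0 := by
  have hconj_pos : 0 < (U : ℝ) - V * r := by by_contra! h; nlinarith
  have hU_upp : (U : ℝ) < 3 := by nlinarith
  have hU_low : (2 : ℝ) ≤ U := by nlinarith
  obtain rfl : U = 2 := by
    have : U < 3 := mod_cast hU_upp
    have : 2 ≤ U := mod_cast hU_low
    omega
  have hV : (V : ℝ) ^ 2 * r ^ 2 = 0 := by push_cast at hUV; linarith
  exact ⟨rfl, by simpa [(by linarith : r ≠ 0)] using hV⟩

theorem card_le_of_dvd_two_mul_cross_of_pos {D n : ℤ} {R : ℕ} (hD : 0 < D) (hDR : D ≤ R)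
    (hn : n ≠ 0) {T : Finset (ℤ × ℤ)} (hT : T ⊆ pellBox D n R)
    (hclass : ∀ a ∈ T, ∀ b ∈ T, n ∣ 2 * cross a b) : #T ≤ Nat.log 2 (2 * R ^ 2) + 1 := by
  have hD_cast : (1 : ℝ) ≤ D := mod_cast hD
  have hDR_cast : (D : ℝ) ≤ R := mod_cast hDR
  have hr : 1 ≤ √(D : ℝ) := Real.one_le_sqrt.2 hD_cast
  have hr_sq : √(D : ℝ) ^ 2 = D := Real.sq_sqrt (by linarith)
  have hrR : √(D : ℝ) ≤ R := by nlinarith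
  have hnorm_pos : ∀ a ∈ T, 1 ≤ (a.1 : ℝ) + a.2 * √D := fun a ha => by
    obtain ⟨⟨⟨h₁, -⟩, h₂, -⟩, hnorm⟩ := mem_pellBox.1 (hT ha)
    have hsum : 1 ≤ a.1 + a.2 := by
      by_contra! hlt
      obtain ⟨h₁', h₂'⟩ : a.1 = 0 ∧ a.2 = 0 := by omega
      exact hn (by rw [← hnorm, h₁', h₂']; ring)
    have : (0 : ℝ) ≤ a.2 := mod_cast h₂
    have : (1 : ℝ) ≤ a.1 + a.2 := mod_cast hsum
    nlinarith
  refine card_le_natLog_add_one_of_dyadic (f := fun a => (a.1 : ℝ) + a.2 * √D)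
    (fun a ha => ⟨hnorm_pos a ha, ?_⟩) fun a ha b hb hab hba => ?_
  · obtain ⟨⟨⟨-, h₁⟩, -, h₂⟩, -⟩ := mem_pellBox.1 (hT ha)
    have h₁' : (a.1 : ℝ) ≤ R := mod_cast h₁
    have h₂' : (a.2 : ℝ) ≤ R := mod_cast h₂
    have : (a.2 : ℝ) * √D ≤ R * R := by gcongr
    push_cast
    nlinarith
  · obtain ⟨U, V, hUV, hb₁, hb₂⟩ := exists_pell_unit hn (mem_pellBox.1 (hT ha)).2
      (mem_pellBox.1 (hT hb)).2 (hclass a ha b hb)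
    have hUV_cast : (U : ℝ) ^ 2 - D * V ^ 2 = 4 := mod_cast hUV
    have hb₁_cast : (2 * b.1 : ℝ) = a.1 * U + D * a.2 * V := mod_cast hb₁
    have hb₂_cast : (2 * b.2 : ℝ) = a.1 * V + a.2 * U := mod_cast hb₂
    have hmul : 2 * ((b.1 : ℝ) + b.2 * √D) = (a.1 + a.2 * √D) * (U + V * √D) := by
      linear_combination hb₁_cast + √D * hb₂_cast - a.2 * V * hr_sq
    have := hnorm_pos a ha
    obtain ⟨rfl, rfl⟩ := eq_two_and_eq_zero_of_pell_unit (U := U) (V := V) hr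
      (by linear_combination hUV_cast - V ^ 2 * hr_sq)
      (by by_contra! h; nlinarith) (by by_contra! h; nlinarith)
    exact Prod.ext (by linarith) (by linarith)

theorem card_le_of_dvd_two_mul_cross {D n : ℤ} {R : ℕ} (hD : D ≠ 0) (hDR : D ≤ R) (hn : n ≠ 0)
    {T : Finset (ℤ × ℤ)} (hT : T ⊆ pellBox D n R)
    (hclass : ∀ a ∈ T, ∀ b ∈ T, n ∣ 2 * cross a b) : #T ≤ Nat.log 2 (2 * R ^ 2) + 25 := by
  rcases lt_or_gt_of_ne hD with hneg | hpos
  · have := card_le_of_dvd_two_mul_cross_of_neg hneg hn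
      (fun a ha => (mem_pellBox.1 (hT ha)).2) hclass
    omega
  · have := card_le_of_dvd_two_mul_cross_of_pos hpos hDR hn hT hclass
    omega

theorem exists_root_of_isCoprime {D n : ℤ} {a : ℤ × ℤ} (ha : a.1 ^ 2 - D * a.2 ^ 2 = n)
    (hcop : IsCoprime a.1 a.2) : ∃ t, n ∣ t ^ 2 - D ∧ n ∣ a.1 - t * a.2 := by
  have hcop_n : IsCoprime (a.2 ^ 2) n := by
    have := (hcop.symm.pow (m := 2) (n := 2)).add_mul_left_right (-D)
    rwa [mul_comm, neg_mul, ← sub_eq_add_neg, ha] at this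
  obtain ⟨u, v, huv⟩ := (IsCoprime.pow_left_iff two_pos).1 hcop_n
  have ht : n ∣ a.1 - a.1 * u * a.2 := ⟨a.1 * v, by linear_combination -a.1 * huv⟩
  refine ⟨a.1 * u, hcop_n.symm.dvd_of_dvd_mul_left ?_, ht⟩
  have := (dvd_refl n).sub (ht.mul_right (a.1 + a.1 * u * a.2))
  nth_rw 2 [← ha] at this
  convert this using 1
  ring

theorem card_pellBox_coprime_le {D n : ℤ} {R : ℕ} (hD : Squarefree D) (hDR : D ≤ R) (hn : n ≠ 0) :
    #{a ∈ pellBox D n R | IsCoprime a.1 a.2} ≤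
      (Nat.log 2 (2 * R ^ 2) + 25) * #n.natAbs.divisors := by
  set T := {a ∈ pellBox D n R | IsCoprime a.1 a.2}
  have hTbox : ∀ a ∈ T, a ∈ pellBox D n R := fun a ha => mem_of_mem_filter a ha
  choose! t ht hat using fun a (ha : a ∈ T) =>
    exists_root_of_isCoprime (mem_pellBox.1 (hTbox a ha)).2 (mem_filter.1 ha).2
  rcases T.eq_empty_or_nonempty with hempty | ⟨c, hc⟩
  · simp only [hempty, card_empty, zero_le]
  refine card_le_mul_card_image_of_maps_to (f := fun a => Int.gcd (t a - t c) n)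
    (fun a _ => ?_) _ fun g _ => ?_
  · exact Nat.mem_divisors.2
      ⟨Int.natCast_dvd.1 (Int.gcd_dvd_right ..), Int.natAbs_ne_zero.2 hn⟩
  refine card_le_of_dvd_two_mul_cross hD.ne_zero hDR hn
    (fun a ha => hTbox a (mem_of_mem_filter a ha)) fun a ha b hb => ?_
  obtain ⟨ha, hag⟩ := mem_filter.1 ha
  obtain ⟨hb, hbg⟩ := mem_filter.1 hb
  have hroots := dvd_two_mul_sub_of_gcd_eq hD hn (ht a ha) (ht b hb) (ht c hc) (hag.trans hbg.symm)
  rw [show 2 * cross a b = 2 * (t a - t b) * (a.2 * b.2) +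
    ((a.1 - t a * a.2) * (2 * b.2) - (b.1 - t b * b.2) * (2 * a.2)) by rw [cross]; ring]
  exact (hroots.mul_right _).add (((hat a ha).mul_right _).sub ((hat b hb).mul_right _))

theorem card_pellBox_filter_gcd_le {D n : ℤ} {R g : ℕ} (hD : Squarefree D) (hDR : D ≤ R)
    (hn : n ≠ 0) (hg : 0 < g) :
    #{a ∈ pellBox D n R | Int.gcd a.1 a.2 = g} ≤
      (Nat.log 2 (2 * R ^ 2) + 25) * #n.natAbs.divisors := by
  have hg_one : (1 : ℤ) ≤ g := mod_cast hg
  rcases {a ∈ pellBox D n R | Int.gcd a.1 a.2 = g}.eq_empty_or_nonempty with hempty | ⟨c, hc⟩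
  · simp only [hempty, card_empty, zero_le]
  have hscale : ∀ a ∈ {a ∈ pellBox D n R | Int.gcd a.1 a.2 = g},
      ∃ b : ℤ × ℤ, IsCoprime b.1 b.2 ∧ a.1 = b.1 * g ∧ a.2 = b.2 * g := fun a ha => by
    obtain ⟨-, rfl⟩ := mem_filter.1 ha
    obtain ⟨x, z, hxz, hx, hz⟩ := Int.exists_gcd_one hg
    exact ⟨(x, z), Int.isCoprime_iff_gcd_eq_one.2 hxz, hx, hz⟩
  choose! b hcop h₁ h₂ using hscale
  have hnorm : ∀ a ∈ {a ∈ pellBox D n R | Int.gcd a.1 a.2 = g},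
      n = g ^ 2 * ((b a).1 ^ 2 - D * (b a).2 ^ 2) := fun a ha => by
    rw [← (mem_pellBox.1 (mem_of_mem_filter a ha)).2, h₁ a ha, h₂ a ha]
    ring
  obtain ⟨n', hn'⟩ : ∃ n', n = g ^ 2 * n' := ⟨_, hnorm c hc⟩
  have hn'0 : n' ≠ 0 := right_ne_zero_of_mul (hn' ▸ hn)
  calc #{a ∈ pellBox D n R | Int.gcd a.1 a.2 = g}
      ≤ #{a ∈ pellBox D n' R | IsCoprime a.1 a.2} := by
        refine card_le_card_of_injOn b (fun a ha => ?_) fun a ha a' ha' haa' => ?_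
        · obtain ⟨⟨⟨hx, hxR⟩, hz, hzR⟩, -⟩ := mem_pellBox.1 (mem_of_mem_filter a ha)
          rw [h₁ a ha] at hx hxR
          rw [h₂ a ha] at hz hzR
          refine mem_coe.2 (mem_filter.2 ⟨mem_pellBox.2
            ⟨⟨⟨by nlinarith, by nlinarith⟩, by nlinarith, by nlinarith⟩, ?_⟩, hcop a ha⟩)
          exact mul_left_cancel₀ (pow_ne_zero 2 (by omega)) ((hnorm a ha).symm.trans hn')
        · exact Prod.ext (by rw [h₁ a ha, h₁ a' ha', haa']) (by rw [h₂ a ha, h₂ a' ha', haa'])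
    _ ≤ (Nat.log 2 (2 * R ^ 2) + 25) * #n'.natAbs.divisors := card_pellBox_coprime_le hD hDR hn'0
    _ ≤ (Nat.log 2 (2 * R ^ 2) + 25) * #n.natAbs.divisors := by
        refine Nat.mul_le_mul_left _ ?_
        exact card_le_card (Nat.divisors_subset_of_dvd (Int.natAbs_ne_zero.2 hn)
          (Int.natAbs_dvd_natAbs.2 (Dvd.intro_left _ hn'.symm)))

theorem card_pellBox_le {D n : ℤ} {R : ℕ} (hD : Squarefree D) (hDR : D ≤ R) (hn : n ≠ 0) :
    #(pellBox D n R) ≤ (Nat.log 2 (2 * R ^ 2) + 25) * #n.natAbs.divisors ^ 2 := by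
  rw [sq (#_), ← mul_assoc]
  refine card_le_mul_card_image_of_maps_to (f := fun a : ℤ × ℤ => Int.gcd a.1 a.2)
    (fun a ha => ?_) _ fun g hg =>
      card_pellBox_filter_gcd_le hD hDR hn (Nat.pos_of_mem_divisors hg)
  refine Nat.mem_divisors.2 ⟨Int.natCast_dvd.1 ?_, Int.natAbs_ne_zero.2 hn⟩
  rw [← (mem_pellBox.1 ha).2]
  exact ((Int.gcd_dvd_left ..).pow two_ne_zero).sub
    (((Int.gcd_dvd_right ..).pow two_ne_zero).mul_left D)

/-! ### Binary diagonal forms -/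

theorem exists_eq_squarefree_mul_sq {n : ℤ} (hn : n ≠ 0) :
    ∃ D d : ℤ, 0 < d ∧ Squarefree D ∧ n = D * d ^ 2 := by
  obtain ⟨a, b, hab, ha⟩ := Nat.sq_mul_squarefree n.natAbs
  have hb : b ≠ 0 := by
    rintro rfl
    exact hn (Int.natAbs_eq_zero.1 (by rw [← hab]; ring))
  have hn_eq : n = n.sign * a * b ^ 2 := by
    conv_lhs => rw [← Int.sign_mul_natAbs n, ← hab]
    push_cast
    ring
  refine ⟨n.sign * a, b, mod_cast Nat.pos_of_ne_zero hb, ?_, hn_eq⟩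
  rw [← Int.squarefree_natAbs, Int.natAbs_mul, Int.natAbs_sign_of_ne_zero hn, one_mul]
  exact ha

/-- The solutions `(x, y)` of `A y² - B x² = w` with `0 ≤ x, y ≤ R`. For `(A, B)` in the lattice
below, these are the `(x₁, x₂)` whose squares lie on a given line of direction `(A, B)`. -/
noncomputable def binaryFormBox (A B w : ℤ) (R : ℕ) : Finset (ℤ × ℤ) :=
  {a ∈ Icc 0 (R : ℤ) ×ˢ Icc 0 (R : ℤ) | A * a.2 ^ 2 - B * a.1 ^ 2 = w}

theorem mem_binaryFormBox {A B w : ℤ} {R : ℕ} {a : ℤ × ℤ} :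
    a ∈ binaryFormBox A B w R ↔
      ((0 ≤ a.1 ∧ a.1 ≤ R) ∧ 0 ≤ a.2 ∧ a.2 ≤ R) ∧ A * a.2 ^ 2 - B * a.1 ^ 2 = w := by
  simp only [binaryFormBox, mem_filter, mem_product, mem_Icc]

-- With `A B = D d²`, multiplying by `A` turns the equation into `(A y)² - D (d x)² = A w`.
theorem card_binaryFormBox_le {A B w : ℤ} {R : ℕ} (hA : A ≠ 0) (hB : B ≠ 0) (hw : w ≠ 0)
    (hAR : |A| ≤ R) (hBR : |B| ≤ R) :
    #(binaryFormBox A B w R) ≤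
      (Nat.log 2 (2 * R ^ 4) + 25) * #(A * w).natAbs.divisors ^ 2 := by
  obtain ⟨D, d, hd, hD, hABD⟩ := exists_eq_squarefree_mul_sq (mul_ne_zero hA hB)
  have hD_one : 1 ≤ |D| := Int.one_le_abs hD.ne_zero
  have hDd : |D| * d ^ 2 ≤ R * R := by
    rw [← abs_of_nonneg (sq_nonneg d), ← abs_mul, ← hABD, abs_mul]
    gcongr
  have hdR : d ≤ R := abs_le_of_sq_le_sq' (by nlinarith) (by positivity) |>.2
  have hDR : D ≤ (R ^ 2 : ℕ) := by
    push_cast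
    have : |D| ≤ |D| * d ^ 2 := le_mul_of_one_le_right (abs_nonneg D) (one_le_pow₀ hd)
    linarith [le_abs_self D]
  have hA_pos : 0 < |A| := abs_pos.2 hA
  have hpell := card_pellBox_le hD hDR (mul_ne_zero hA hw)
  rw [← pow_mul] at hpell
  refine le_trans (card_le_card_of_injOn (fun a => (|A| * a.2, d * a.1))
    (fun a ha => ?_) fun a _ b _ hab => ?_) hpell
  · obtain ⟨⟨⟨hx, hxR⟩, hy, hyR⟩, hform⟩ := mem_binaryFormBox.1 ha
    refine mem_coe.2 (mem_pellBox.2 ⟨⟨⟨by positivity, ?_⟩, by positivity, ?_⟩, ?_⟩)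
    · push_cast
      rw [sq]
      gcongr
    · push_cast
      rw [sq]
      gcongr
    · rw [mul_pow, sq_abs, ← hform]
      linear_combination a.1 ^ 2 * hABD
  · obtain ⟨h₂, h₁⟩ := Prod.mk.inj hab
    exact Prod.ext (mul_left_cancel₀ hd.ne' h₁) (mul_left_cancel₀ hA_pos.ne' h₂)

theorem natAbs_mul_le_of_mem_binaryFormBox {A B w : ℤ} {R : ℕ} {a : ℤ × ℤ} (hAR : |A| ≤ R)
    (hBR : |B| ≤ R) (ha : a ∈ binaryFormBox A B w R) : (A * w).natAbs ≤ 2 * R ^ 4 := by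
  obtain ⟨⟨⟨hx, hxR⟩, hy, hyR⟩, rfl⟩ := mem_binaryFormBox.1 ha
  zify
  rw [abs_mul]
  calc |A| * |A * a.2 ^ 2 - B * a.1 ^ 2| ≤ |A| * (|A * a.2 ^ 2| + |B * a.1 ^ 2|) := by
        gcongr
        exact abs_sub _ _
    _ = |A| * (|A| * a.2 ^ 2 + |B| * a.1 ^ 2) := by simp only [abs_mul, abs_sq]
    _ ≤ R * (R * R ^ 2 + R * R ^ 2) := by gcongr
    _ = 2 * R ^ 4 := by ring

theorem exists_card_binaryFormBox_le {δ : ℝ} (hδ : 0 < δ) :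
    ∃ C : ℝ, 0 < C ∧ ∀ (R : ℕ) (A B w : ℤ), A ≠ 0 → B ≠ 0 → w ≠ 0 → |A| ≤ R → |B| ≤ R →
      (#(binaryFormBox A B w R) : ℝ) ≤ C * (R : ℝ) ^ δ := by
  obtain ⟨C, hC, hdiv⟩ := exists_card_divisors_le_mul_rpow (show 0 < δ / 12 by positivity)
  refine ⟨25 * C ^ 3 * 2 ^ (δ / 4), by positivity, fun R A B w hA hB hw hAR hBR => ?_⟩
  rcases (binaryFormBox A B w R).eq_empty_or_nonempty with hempty | ⟨c, hc⟩
  · rw [hempty, card_empty, Nat.cast_zero]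
    positivity
  have hR : R ≠ 0 := by
    rintro rfl
    exact hA (abs_nonpos_iff.1 hAR)
  -- The divisor bound at a power of `2` bounds the logarithm.
  have hlog : (Nat.log 2 (2 * R ^ 4) + 1 : ℝ) ≤ C * ((2 * R ^ 4 : ℕ) : ℝ) ^ (δ / 12) :=
    calc (Nat.log 2 (2 * R ^ 4) + 1 : ℝ) = #(2 ^ Nat.log 2 (2 * R ^ 4)).divisors := by
          rw [Nat.divisors_prime_pow Nat.prime_two, card_map, card_range, Nat.cast_succ]
      _ ≤ C * ((2 ^ Nat.log 2 (2 * R ^ 4) : ℕ) : ℝ) ^ (δ / 12) := hdiv _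
      _ ≤ C * ((2 * R ^ 4 : ℕ) : ℝ) ^ (δ / 12) := by
          gcongr
          exact Nat.pow_log_le_self 2 (by positivity)
  have hdiv_w : (#(A * w).natAbs.divisors : ℝ) ≤ C * ((2 * R ^ 4 : ℕ) : ℝ) ^ (δ / 12) := by
    refine (hdiv _).trans ?_
    gcongr
    exact natAbs_mul_le_of_mem_binaryFormBox hAR hBR hc
  calc (#(binaryFormBox A B w R) : ℝ)
      ≤ (Nat.log 2 (2 * R ^ 4) + 25) * #(A * w).natAbs.divisors ^ 2 :=
        mod_cast card_binaryFormBox_le hA hB hw hAR hBR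
    _ ≤ (25 * (C * ((2 * R ^ 4 : ℕ) : ℝ) ^ (δ / 12))) *
          (C * ((2 * R ^ 4 : ℕ) : ℝ) ^ (δ / 12)) ^ 2 := by
        gcongr
        linarith [(Nat.log 2 (2 * R ^ 4)).cast_nonneg (α := ℝ)]
    _ = 25 * C ^ 3 * (((2 * R ^ 4 : ℕ) : ℝ) ^ (δ / 12)) ^ 3 := by ring
    _ = 25 * C ^ 3 * 2 ^ (δ / 4) * (R : ℝ) ^ δ := by
        rw [← Real.rpow_mul_natCast (by positivity), Nat.cast_mul, Nat.cast_pow,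
          Real.mul_rpow (by positivity) (by positivity), ← Real.rpow_natCast_mul (by positivity)]
        push_cast
        ring_nf

/-! ### Lattice points -/

theorem cast_card_le_mul_card_of_mapsTo {ι κ : Type*} [DecidableEq κ] {s : Finset ι} {t : Finset κ}
    {f : ι → κ} {B : ℝ} (hf : ∀ a ∈ s, f a ∈ t) (hB : ∀ b ∈ t, (#{a ∈ s | f a = b} : ℝ) ≤ B) :
    (#s : ℝ) ≤ B * #t := by
  rw [card_eq_sum_card_fiberwise hf, Nat.cast_sum, mul_comm, ← nsmul_eq_mul]
  exact sum_le_card_nsmul t _ B hB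

theorem card_le_of_separated {ι : Type*} {T : Finset ι} {f : ι → ℝ} {s W : ℝ} (hs : 0 < s)
    (hW : 0 ≤ W) (hf : ∀ a ∈ T, |f a| ≤ W)
    (hsep : ∀ a ∈ T, ∀ b ∈ T, a ≠ b → s ≤ |f a - f b|) : (#T : ℝ) ≤ 2 * W / s + 1 := by
  have hcard : #T ≤ #(range (⌊2 * W / s⌋₊ + 1)) := by
    refine card_le_card_of_injOn (fun a => ⌊(f a + W) / s⌋₊) (fun a ha => ?_)
      fun a ha b hb hab => ?_
    · have := (abs_le.1 (hf a ha)).2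
      refine mem_coe.2 (mem_range.2 (Nat.lt_succ_of_le (Nat.floor_le_floor ?_)))
      gcongr
      linarith
    · by_contra hne
      have hnonneg : ∀ c ∈ T, 0 ≤ (f c + W) / s := fun c hc =>
        div_nonneg (by linarith [(abs_le.1 (hf c hc)).1]) hs.le
      have hclose : |(f a + W) / s - (f b + W) / s| < 1 := by
        refine Int.abs_sub_lt_one_of_floor_eq_floor ?_
        rw [← Int.natCast_floor_eq_floor (hnonneg a ha),
          ← Int.natCast_floor_eq_floor (hnonneg b hb)]
        exact congrArg _ hab
      rw [← sub_div, add_sub_add_right_eq_sub, abs_div, abs_of_pos hs, div_lt_one hs] at hclose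
      exact hclose.not_ge (hsep a ha b hb hne)
  calc (#T : ℝ) ≤ ⌊2 * W / s⌋₊ + 1 := by
        rw [card_range] at hcard
        exact_mod_cast hcard
    _ ≤ 2 * W / s + 1 := by
        gcongr
        exact Nat.floor_le (by positivity)

theorem cross_sub_right (u v w : ℤ × ℤ) : cross u (v - w) = cross u v - cross u w := by
  simp only [cross, Prod.fst_sub, Prod.snd_sub]
  ring

theorem norm_cross_le (u v : ℤ × ℤ) : ‖cross u v‖ ≤ 2 * ‖u‖ * ‖v‖ :=
  calc ‖cross u v‖ ≤ ‖u.1 * v.2‖ + ‖u.2 * v.1‖ := norm_sub_le _ _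
    _ = ‖u.1‖ * ‖v.2‖ + ‖u.2‖ * ‖v.1‖ := by rw [norm_mul, norm_mul]
    _ ≤ ‖u‖ * ‖v‖ + ‖u‖ * ‖v‖ := by
        gcongr
        exacts [norm_fst_le u, norm_snd_le v, norm_snd_le u, norm_fst_le v]
    _ = 2 * ‖u‖ * ‖v‖ := by ring

theorem exists_coordinate_norm_eq_of_cross_eq_zero {v : ℤ × ℤ} (hv : v ≠ 0) :
    ∃ π : ℤ × ℤ →+ ℤ, ∀ d, ‖π d‖ ≤ ‖d‖ ∧ (cross v d = 0 → ‖π d‖ = ‖d‖) := by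
  rcases le_total ‖v.2‖ ‖v.1‖ with h | h
  · refine ⟨AddMonoidHom.fst ℤ ℤ, fun d => ⟨norm_fst_le d, fun hd => ?_⟩⟩
    have hv₁ : 0 < ‖v.1‖ := by
      by_contra! h₀
      exact hv (Prod.ext (norm_le_zero_iff.1 h₀) (norm_le_zero_iff.1 (h.trans h₀)))
    have heq : ‖v.1‖ * ‖d.2‖ = ‖v.2‖ * ‖d.1‖ := by rw [← norm_mul, ← norm_mul, sub_eq_zero.1 hd]
    have hle : ‖d.2‖ ≤ ‖d.1‖ := le_of_mul_le_mul_left (heq.trans_le (by gcongr)) hv₁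
    simp only [Prod.norm_def, AddMonoidHom.coe_fst, max_eq_left hle]
  · refine ⟨AddMonoidHom.snd ℤ ℤ, fun d => ⟨norm_snd_le d, fun hd => ?_⟩⟩
    have hv₂ : 0 < ‖v.2‖ := by
      by_contra! h₀
      exact hv (Prod.ext (norm_le_zero_iff.1 (h.trans h₀)) (norm_le_zero_iff.1 h₀))
    have heq : ‖v.2‖ * ‖d.1‖ = ‖v.1‖ * ‖d.2‖ := by rw [← norm_mul, ← norm_mul, sub_eq_zero.1 hd]
    have hle : ‖d.1‖ ≤ ‖d.2‖ := le_of_mul_le_mul_left (heq.trans_le (by gcongr)) hv₂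
    simp only [Prod.norm_def, AddMonoidHom.coe_snd, max_eq_right hle]

section Lattice

variable {Λ : AddSubgroup (ℤ × ℤ)} {v : ℤ × ℤ} {G : Finset (ℤ × ℤ)} {K : ℝ}

theorem card_le_of_cross_eq (hv : v ≠ 0) (hmin : ∀ w ∈ Λ, w ≠ 0 → ‖v‖ ≤ ‖w‖) (hK : 0 ≤ K)
    (hG : ∀ P ∈ G, ‖P‖ ≤ K) (hGΛ : ∀ P ∈ G, ∀ Q ∈ G, P - Q ∈ Λ)
    (hline : ∀ P ∈ G, ∀ Q ∈ G, cross v P = cross v Q) : (#G : ℝ) ≤ 2 * K / ‖v‖ + 1 := by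
  obtain ⟨π, hπ⟩ := exists_coordinate_norm_eq_of_cross_eq_zero hv
  refine card_le_of_separated (f := fun P => (π P : ℝ)) (norm_pos_iff.2 hv) hK
    (fun P hP => ?_) fun P hP Q hQ hne => ?_
  · rw [← Int.norm_eq_abs]
    exact (hπ P).1.trans (hG P hP)
  · have hzero : cross v (P - Q) = 0 := by rw [cross_sub_right, hline P hP Q hQ, sub_self]
    rw [← Int.cast_sub, ← map_sub, ← Int.norm_eq_abs, (hπ _).2 hzero]
    exact hmin _ (hGΛ P hP Q hQ) (sub_ne_zero.2 hne)

theorem card_image_cross_le {q : ℕ} (hq : 0 < q) (hcross : ∀ w ∈ Λ, (q : ℤ) ∣ cross v w)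
    (hK : 0 ≤ K) (hG : ∀ P ∈ G, ‖P‖ ≤ K) (hGΛ : ∀ P ∈ G, ∀ Q ∈ G, P - Q ∈ Λ) :
    (#(G.image (cross v)) : ℝ) ≤ 4 * ‖v‖ * K / q + 1 := by
  have := card_le_of_separated (T := G.image (cross v)) (f := Int.cast) (s := q)
    (W := 2 * ‖v‖ * K) (by positivity) (by positivity) ?_ ?_
  · exact this.trans_eq (by ring)
  · rw [forall_mem_image]
    intro P hP
    rw [← Int.norm_eq_abs]
    exact (norm_cross_le v P).trans (by gcongr; exact hG P hP)
  · simp only [forall_mem_image]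
    intro P hP Q hQ hne
    have hdvd := hcross _ (hGΛ P hP Q hQ)
    rw [cross_sub_right] at hdvd
    exact_mod_cast Int.le_of_dvd (abs_pos.2 (sub_ne_zero.2 hne)) ((dvd_abs _ _).2 hdvd)

theorem card_lattice_le {q : ℕ} (hq : 0 < q) (hv : v ≠ 0) (hmin : ∀ w ∈ Λ, w ≠ 0 → ‖v‖ ≤ ‖w‖)
    (hcross : ∀ w ∈ Λ, (q : ℤ) ∣ cross v w) (hK : 0 ≤ K) (hG : ∀ P ∈ G, ‖P‖ ≤ K ∧ P ∈ Λ) :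
    (#G : ℝ) ≤ (2 * K / ‖v‖ + 1) * (4 * ‖v‖ * K / q + 1) := by
  have hGΛ : ∀ P ∈ G, ∀ Q ∈ G, P - Q ∈ Λ := fun P hP Q hQ => Λ.sub_mem (hG P hP).2 (hG Q hQ).2
  calc (#G : ℝ) ≤ (2 * K / ‖v‖ + 1) * #(G.image (cross v)) := by
        refine cast_card_le_mul_card_of_mapsTo (f := cross v)
          (fun P hP => mem_image_of_mem _ hP) fun w _ => ?_
        have hsub : ∀ P ∈ {P ∈ G | cross v P = w}, P ∈ G := fun P hP => mem_of_mem_filter P hP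
        exact card_le_of_cross_eq hv hmin hK (fun P hP => (hG P (hsub P hP)).1)
          (fun P hP Q hQ => hGΛ P (hsub P hP) Q (hsub Q hQ)) fun P hP Q hQ =>
            (mem_filter.1 hP).2.trans (mem_filter.1 hQ).2.symm
    _ ≤ (2 * K / ‖v‖ + 1) * (4 * ‖v‖ * K / q + 1) := by
        gcongr
        exact card_image_cross_le hq hcross hK (fun P hP => (hG P hP).1) hGΛ

end Lattice

/-- The lattice of `(a, b)` with `β₁ a + β₂ b ≡ 0 (mod q)`. It contains the difference of the points
`(x₁², x₂²)` coming from two solutions with the same `x₃`. -/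
def congruenceLattice (q : ℕ) (β₁ β₂ : ℤ) : AddSubgroup (ℤ × ℤ) :=
  (AddSubgroup.zmultiples (q : ℤ)).comap
    ((AddMonoidHom.mulLeft β₁).coprod (AddMonoidHom.mulLeft β₂))

theorem mem_congruenceLattice {q : ℕ} {β₁ β₂ : ℤ} {a : ℤ × ℤ} :
    a ∈ congruenceLattice q β₁ β₂ ↔ (q : ℤ) ∣ β₁ * a.1 + β₂ * a.2 := by
  simp only [congruenceLattice, AddSubgroup.mem_comap, Int.mem_zmultiples_iff,
    AddMonoidHom.coprod_apply, AddMonoidHom.coe_mulLeft]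

section CongruenceLattice

variable {q : ℕ} {β₁ β₂ : ℤ} {a b : ℤ × ℤ}

theorem dvd_cross_of_mem_congruenceLattice (h₁ : IsCoprime β₁ q)
    (ha : a ∈ congruenceLattice q β₁ β₂) (hb : b ∈ congruenceLattice q β₁ β₂) :
    (q : ℤ) ∣ cross a b := by
  refine h₁.symm.dvd_of_dvd_mul_left ?_
  convert dvd_sub ((mem_congruenceLattice.1 ha).mul_left b.2)
    ((mem_congruenceLattice.1 hb).mul_left a.2) using 1
  rw [cross]
  ring

theorem eq_zero_of_dvd_of_norm_lt {x : ℤ} (hx : ‖x‖ < q) (hdvd : (q : ℤ) ∣ x) : x = 0 :=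
  Int.eq_zero_of_abs_lt_dvd hdvd (by rw [Int.norm_eq_abs] at hx; exact_mod_cast hx)

theorem ne_zero_of_mem_congruenceLattice (h₁ : IsCoprime β₁ q) (h₂ : IsCoprime β₂ q)
    (ha : a ∈ congruenceLattice q β₁ β₂) (ha₀ : a ≠ 0) (haq : ‖a‖ < q) : a.1 ≠ 0 ∧ a.2 ≠ 0 := by
  rw [mem_congruenceLattice] at ha
  constructor <;> intro h₀ <;> rw [h₀, mul_zero] at ha
  · rw [zero_add] at ha
    exact ha₀ (Prod.ext h₀ (eq_zero_of_dvd_of_norm_lt ((norm_snd_le a).trans_lt haq)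
      (h₂.symm.dvd_of_dvd_mul_left ha)))
  · rw [add_zero] at ha
    exact ha₀ (Prod.ext (eq_zero_of_dvd_of_norm_lt ((norm_fst_le a).trans_lt haq)
      (h₁.symm.dvd_of_dvd_mul_left ha)) h₀)

theorem exists_norm_sq_le_mem_congruenceLattice (hq : 0 < q) (β₁ β₂ : ℤ) :
    ∃ a ∈ congruenceLattice q β₁ β₂, a ≠ 0 ∧ ‖a‖ ^ 2 ≤ (q : ℝ) := by
  have : NeZero q := ⟨hq.ne'⟩
  set B : Finset (ℤ × ℤ) := Icc 0 (Nat.sqrt q : ℤ) ×ˢ Icc 0 (Nat.sqrt q : ℤ) with hB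
  have hcard : #(univ : Finset (ZMod q)) < #B := by
    have := Nat.lt_succ_sqrt q
    simpa [hB, ZMod.card] using this
  obtain ⟨x, hx, y, hy, hne, hxy⟩ := exists_ne_map_eq_of_card_lt_of_maps_to hcard
    (f := fun x => ((β₁ * x.1 + β₂ * x.2 : ℤ) : ZMod q)) fun _ _ => mem_coe.2 (mem_univ _)
  refine ⟨x - y, ?_, sub_ne_zero.2 hne, ?_⟩
  · rw [mem_congruenceLattice]
    convert (ZMod.intCast_eq_intCast_iff_dvd_sub _ _ _).1 hxy.symm using 1
    simp only [Prod.fst_sub, Prod.snd_sub]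
    ring
  · have hnorm : ‖x - y‖ ≤ Nat.sqrt q := by
      simp only [hB, mem_product, mem_Icc] at hx hy
      rw [Prod.norm_def, Int.norm_eq_abs, Int.norm_eq_abs, Prod.fst_sub, Prod.snd_sub]
      refine max_le ?_ ?_ <;> norm_cast <;> rw [abs_le] <;> constructor <;> linarith
    calc ‖x - y‖ ^ 2 ≤ (Nat.sqrt q : ℝ) ^ 2 := by gcongr
      _ ≤ (q : ℝ) := mod_cast Nat.sqrt_le' q

end CongruenceLattice

theorem exists_min_norm {S : Set (ℤ × ℤ)} (hS : S.Nonempty) : ∃ v ∈ S, ∀ w ∈ S, ‖v‖ ≤ ‖w‖ := by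
  have hnorm : ∀ w : ℤ × ℤ, ‖w‖ = (max w.1.natAbs w.2.natAbs : ℕ) := fun w => by
    rw [Prod.norm_def, Nat.cast_max, Int.norm_eq_abs, Int.norm_eq_abs, Nat.cast_natAbs,
      Nat.cast_natAbs, Int.cast_abs, Int.cast_abs]
  obtain ⟨v, hv, hmin⟩ :=
    (measure fun w : ℤ × ℤ => max w.1.natAbs w.2.natAbs).wf.has_min S hS
  refine ⟨v, hv, fun w hw => ?_⟩
  rw [hnorm, hnorm]
  exact_mod_cast not_lt.1 (hmin w hw)

/-! ### Solutions with nonnegative coordinates -/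

/-- The solutions of `β₁ x₁² + β₂ x₂² + β₃ x₃² ≡ 0 (mod q)` with `0 ≤ x₁, x₂, x₃ ≤ m`, to which
the signed count reduces since only squares occur. -/
noncomputable def solutionBox (q : ℕ) (β₁ β₂ β₃ : ℤ) (m : ℕ) : Finset (ℤ × ℤ × ℤ) :=
  {x ∈ Icc 0 (m : ℤ) ×ˢ Icc 0 (m : ℤ) ×ˢ Icc 0 (m : ℤ) |
    (q : ℤ) ∣ β₁ * x.1 ^ 2 + β₂ * x.2.1 ^ 2 + β₃ * x.2.2 ^ 2}

/-- The point `(x₁², x₂²)`: for a fixed `x₃`, these points of the solutions lie in one coset of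
`congruenceLattice q β₁ β₂`. -/
def sqPair (x : ℤ × ℤ × ℤ) : ℤ × ℤ := (x.1 ^ 2, x.2.1 ^ 2)

theorem eq_of_dvd_sq_sub_sq {q β : ℤ} {m x y : ℤ} (hβ : IsCoprime β q) (hm : m ^ 2 < q)
    (hx : 0 ≤ x) (hxm : x ≤ m) (hy : 0 ≤ y) (hym : y ≤ m) (h : q ∣ β * (x ^ 2 - y ^ 2)) :
    x = y := by
  have hsq : x ^ 2 - y ^ 2 = 0 :=
    Int.eq_zero_of_abs_lt_dvd (hβ.symm.dvd_of_dvd_mul_left h)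
      (abs_lt.2 ⟨by nlinarith, by nlinarith⟩)
  exact (sq_eq_sq₀ hx hy).1 (sub_eq_zero.1 hsq)

theorem eq_and_eq_of_add_eq_of_sq_sub_sq_eq {a x y x' y' : ℤ} (ha : a ≠ 0)
    (h : x ^ 2 - y ^ 2 = a) (h' : x' ^ 2 - y' ^ 2 = a) (hadd : x + y = x' + y') :
    x = x' ∧ y = y' := by
  have hadd_ne : x + y ≠ 0 := fun h₀ => ha (by rw [← h, sq_sub_sq, h₀, zero_mul])
  have hsub : x - y = x' - y' := mul_left_cancel₀ hadd_ne (by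
    linear_combination h - h' - (x' - y') * hadd)
  omega

theorem card_sq_le_card_mul_card_add_offDiag {ι κ : Type*} [DecidableEq κ] {S : Finset ι}
    {I : Finset κ} {f : ι → κ} (hf : ∀ x ∈ S, f x ∈ I) :
    #S ^ 2 ≤ #I * (#S + #{z ∈ S.offDiag | f z.1 = f z.2}) := by
  classical
  have hpairs : #{z ∈ S ×ˢ S | f z.1 = f z.2} = ∑ c ∈ I, #{x ∈ S | f x = c} ^ 2 := by
    rw [card_eq_sum_card_fiberwise (f := fun z => f z.1) (t := I)
      fun z hz => hf _ (mem_product.1 (mem_filter.1 hz).1).1]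
    refine sum_congr rfl fun c _ => ?_
    rw [sq, ← card_product]
    congr 1
    ext z
    simp only [mem_filter, mem_product]
    grind
  calc #S ^ 2 = (∑ c ∈ I, #{x ∈ S | f x = c}) ^ 2 := by rw [card_eq_sum_card_fiberwise hf]
    _ ≤ #I * ∑ c ∈ I, #{x ∈ S | f x = c} ^ 2 := sq_sum_le_card_mul_sum_sq
    _ ≤ #I * (#S + #{z ∈ S.offDiag | f z.1 = f z.2}) := by
      rw [← hpairs, ← diag_union_offDiag, filter_union]
      gcongr
      refine (card_union_le _ _).trans ?_
      gcongr
      exact (card_filter_le _ _).trans_eq (diag_card S)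

section SolutionBox

variable {q : ℕ} {β₁ β₂ β₃ : ℤ} {m : ℕ} {v : ℤ × ℤ} {x y : ℤ × ℤ × ℤ}

theorem mem_solutionBox :
    x ∈ solutionBox q β₁ β₂ β₃ m ↔
      ((0 ≤ x.1 ∧ x.1 ≤ m) ∧ (0 ≤ x.2.1 ∧ x.2.1 ≤ m) ∧ 0 ≤ x.2.2 ∧ x.2.2 ≤ m) ∧
        (q : ℤ) ∣ β₁ * x.1 ^ 2 + β₂ * x.2.1 ^ 2 + β₃ * x.2.2 ^ 2 := by
  simp only [solutionBox, mem_filter, mem_product, mem_Icc]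

theorem snd_snd_mem_Icc_of_mem_solutionBox (hx : x ∈ solutionBox q β₁ β₂ β₃ m) :
    x.2.2 ∈ Icc 0 (m : ℤ) :=
  mem_Icc.2 (mem_solutionBox.1 hx).1.2.2

theorem norm_sqPair_le (hx : x ∈ solutionBox q β₁ β₂ β₃ m) : ‖sqPair x‖ ≤ (m : ℝ) ^ 2 := by
  obtain ⟨⟨⟨h₁, h₁m⟩, ⟨h₂, h₂m⟩, -⟩, -⟩ := mem_solutionBox.1 hx
  rw [sqPair, Prod.norm_def, Int.norm_eq_abs, Int.norm_eq_abs, max_le_iff]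
  have hsq₁ : x.1 ^ 2 ≤ (m : ℤ) ^ 2 := by gcongr
  have hsq₂ : x.2.1 ^ 2 ≤ (m : ℤ) ^ 2 := by gcongr
  simp only [Int.cast_pow, abs_sq]
  exact_mod_cast And.intro hsq₁ hsq₂

theorem norm_sqPair_sub_le (hx : x ∈ solutionBox q β₁ β₂ β₃ m)
    (hy : y ∈ solutionBox q β₁ β₂ β₃ m) : ‖sqPair x - sqPair y‖ ≤ (m : ℝ) ^ 2 := by
  obtain ⟨⟨⟨h₁, h₁m⟩, ⟨h₂, h₂m⟩, -⟩, -⟩ := mem_solutionBox.1 hx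
  obtain ⟨⟨⟨h₁', h₁m'⟩, ⟨h₂', h₂m'⟩, -⟩, -⟩ := mem_solutionBox.1 hy
  rw [sqPair, sqPair, Prod.mk_sub_mk, Prod.norm_def, Int.norm_eq_abs, Int.norm_eq_abs,
    max_le_iff]
  have hsq₁ : |x.1 ^ 2 - y.1 ^ 2| ≤ (m : ℤ) ^ 2 := abs_le.2 ⟨by nlinarith, by nlinarith⟩
  have hsq₂ : |x.2.1 ^ 2 - y.2.1 ^ 2| ≤ (m : ℤ) ^ 2 := abs_le.2 ⟨by nlinarith, by nlinarith⟩
  exact_mod_cast And.intro hsq₁ hsq₂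

theorem sqPair_sub_mem_congruenceLattice (hx : x ∈ solutionBox q β₁ β₂ β₃ m)
    (hy : y ∈ solutionBox q β₁ β₂ β₃ m) (hxy : x.2.2 = y.2.2) :
    sqPair x - sqPair y ∈ congruenceLattice q β₁ β₂ := by
  have hdvd := dvd_sub (mem_solutionBox.1 hx).2 (mem_solutionBox.1 hy).2
  rw [hxy, add_sub_add_right_eq_sub, add_sub_add_comm, ← mul_sub, ← mul_sub] at hdvd
  exact mem_congruenceLattice.2 hdvd

theorem eq_of_sqPair_eq (h₃ : IsCoprime β₃ q) (hm : m ^ 2 < q)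
    (hx : x ∈ solutionBox q β₁ β₂ β₃ m) (hy : y ∈ solutionBox q β₁ β₂ β₃ m)
    (hxy : sqPair x = sqPair y) : x = y := by
  obtain ⟨⟨⟨hx₁, -⟩, ⟨hx₂, -⟩, hx₃, hxm₃⟩, hxq⟩ := mem_solutionBox.1 hx
  obtain ⟨⟨⟨hy₁, -⟩, ⟨hy₂, -⟩, hy₃, hym₃⟩, hyq⟩ := mem_solutionBox.1 hy
  obtain ⟨h₁, h₂⟩ := Prod.mk.inj hxy
  refine Prod.ext ((sq_eq_sq₀ hx₁ hy₁).1 h₁) (Prod.ext ((sq_eq_sq₀ hx₂ hy₂).1 h₂)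
    (eq_of_dvd_sq_sub_sq h₃ (mod_cast hm) hx₃ hxm₃ hy₃ hym₃ ?_))
  have := dvd_sub hxq hyq
  rwa [h₁, h₂, add_sub_add_left_eq_sub, ← mul_sub] at this

theorem card_solutionBox_cross_eq_zero_le (h₃ : IsCoprime β₃ q) (hm : m ^ 2 < q) (hv : v.1 ≠ 0) :
    #{x ∈ solutionBox q β₁ β₂ β₃ m | cross v (sqPair x) = 0} ≤ m + 1 := by
  have hIcc : #(Icc 0 (m : ℤ)) = m + 1 := by rw [Int.card_Icc]; omega
  rw [← hIcc]
  refine card_le_card_of_injOn Prod.fst (fun x hx => ?_) fun x hx y hy hxy => ?_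
  · exact mem_coe.2 (mem_Icc.2 (mem_solutionBox.1 (mem_of_mem_filter x hx)).1.1)
  · obtain ⟨hx, hx₀⟩ := mem_filter.1 hx
    obtain ⟨hy, hy₀⟩ := mem_filter.1 hy
    have hsq : x.1 ^ 2 = y.1 ^ 2 := by rw [hxy]
    refine eq_of_sqPair_eq h₃ hm hx hy (Prod.ext hsq (mul_left_cancel₀ hv ?_))
    simp only [cross, sqPair] at hx₀ hy₀ ⊢
    linear_combination hx₀ - hy₀ + v.2 * hsq

theorem card_slice_cross_ne_zero_le (hq : 0 < q) (h₁ : IsCoprime β₁ q)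
    (hv : v ∈ congruenceLattice q β₁ β₂) {F : ℝ}
    (hF : ∀ w ≠ 0, (#(binaryFormBox v.1 v.2 w m) : ℝ) ≤ F) (c : ℤ) :
    (#{x ∈ {x ∈ solutionBox q β₁ β₂ β₃ m | cross v (sqPair x) ≠ 0} | x.2.2 = c} : ℝ) ≤
      F * (4 * ‖v‖ * m ^ 2 / q + 1) := by
  set T := {x ∈ {x ∈ solutionBox q β₁ β₂ β₃ m | cross v (sqPair x) ≠ 0} | x.2.2 = c}
  have hmem : ∀ x ∈ T, x ∈ solutionBox q β₁ β₂ β₃ m := fun x hx =>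
    mem_of_mem_filter x (mem_of_mem_filter x hx)
  have hvalues : (#((T.image sqPair).image (cross v)) : ℝ) ≤ 4 * ‖v‖ * m ^ 2 / q + 1 := by
    refine card_image_cross_le (Λ := congruenceLattice q β₁ β₂) hq
      (fun w hw => dvd_cross_of_mem_congruenceLattice h₁ hv hw) (by positivity) ?_ ?_
    all_goals simp only [forall_mem_image]
    · exact fun x hx => norm_sqPair_le (hmem x hx)
    · exact fun x hx y hy => sqPair_sub_mem_congruenceLattice (hmem x hx) (hmem y hy)
        ((mem_filter.1 hx).2.trans (mem_filter.1 hy).2.symm)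
  have hF_nonneg : 0 ≤ F := (Nat.cast_nonneg _).trans (hF 1 one_ne_zero)
  refine (cast_card_le_mul_card_of_mapsTo (f := fun x => cross v (sqPair x))
    (fun x hx => mem_image_of_mem _ (mem_image_of_mem _ hx)) fun w hw => ?_).trans
    (mul_le_mul_of_nonneg_left hvalues hF_nonneg)
  have hw₀ : w ≠ 0 := by
    simp only [mem_image, exists_exists_and_eq_and] at hw
    obtain ⟨x, hx, rfl⟩ := hw
    exact (mem_filter.1 (mem_of_mem_filter x hx)).2
  refine le_trans (mod_cast card_le_card_of_injOn (fun x => (x.1, x.2.1)) (fun x hx => ?_)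
    fun x hx y hy hxy => ?_) (hF w hw₀)
  · obtain ⟨hx, hxw⟩ := mem_filter.1 hx
    obtain ⟨⟨hx₁, hx₂, -⟩, -⟩ := mem_solutionBox.1 (hmem x hx)
    exact mem_coe.2 (mem_binaryFormBox.2 ⟨⟨hx₁, hx₂⟩, hxw⟩)
  · have hx₃ := (mem_filter.1 (mem_of_mem_filter x hx)).2
    have hy₃ := (mem_filter.1 (mem_of_mem_filter y hy)).2
    obtain ⟨hxy₁, hxy₂⟩ := Prod.mk.inj hxy
    exact Prod.ext hxy₁ (Prod.ext hxy₂ (hx₃.trans hy₃.symm))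

theorem card_solutionBox_le_of_card_binaryFormBox_le (h₁ : IsCoprime β₁ q) (h₃ : IsCoprime β₃ q)
    (hm : m ^ 2 < q) (hv : v ∈ congruenceLattice q β₁ β₂) (hv₁ : v.1 ≠ 0) {F : ℝ}
    (hF : ∀ w ≠ 0, (#(binaryFormBox v.1 v.2 w m) : ℝ) ≤ F) :
    (#(solutionBox q β₁ β₂ β₃ m) : ℝ) ≤ (F * (4 * ‖v‖ * m ^ 2 / q + 1) + 1) * (m + 1) := by
  have hq : 0 < q := (Nat.zero_le _).trans_lt hm
  have hIcc : (#(Icc 0 (m : ℤ)) : ℝ) = m + 1 := by simp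
  have hzero : (#{x ∈ solutionBox q β₁ β₂ β₃ m | cross v (sqPair x) = 0} : ℝ) ≤ m + 1 :=
    mod_cast card_solutionBox_cross_eq_zero_le h₃ hm hv₁
  have hne : (#{x ∈ solutionBox q β₁ β₂ β₃ m | cross v (sqPair x) ≠ 0} : ℝ) ≤
      F * (4 * ‖v‖ * m ^ 2 / q + 1) * (m + 1) := by
    rw [← hIcc]
    refine cast_card_le_mul_card_of_mapsTo (f := fun x : ℤ × ℤ × ℤ => x.2.2)
      (fun x hx => snd_snd_mem_Icc_of_mem_solutionBox (mem_of_mem_filter x hx)) fun c _ => ?_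
    exact card_slice_cross_ne_zero_le hq h₁ hv hF c
  rw [← card_filter_add_card_filter_not (fun x => cross v (sqPair x) = 0), Nat.cast_add]
  linarith

theorem card_sqPair_sub_eq_le (h₃ : IsCoprime β₃ q) (hm : m ^ 2 < q) {a : ℤ × ℤ} (ha₁ : a.1 ≠ 0)
    (ha₂ : a.2 ≠ 0) :
    #{z ∈ solutionBox q β₁ β₂ β₃ m ×ˢ solutionBox q β₁ β₂ β₃ m | sqPair z.1 - sqPair z.2 = a} ≤
      #a.1.natAbs.divisors * #a.2.natAbs.divisors := by
  rw [← card_product]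
  refine card_le_card_of_injOn
    (fun z => ((z.1.1 + z.2.1).natAbs, (z.1.2.1 + z.2.2.1).natAbs)) (fun z hz => ?_)
    fun z hz z' hz' hzz' => ?_
  · obtain ⟨-, rfl⟩ := mem_filter.1 hz
    refine mem_coe.2 (mem_product.2 ⟨?_, ?_⟩) <;>
      refine Nat.mem_divisors.2 ⟨Int.natAbs_dvd_natAbs.2 ?_, Int.natAbs_ne_zero.2 ‹_›⟩
    exacts [⟨_, sq_sub_sq _ _⟩, ⟨_, sq_sub_sq _ _⟩]
  · obtain ⟨hzS, hza⟩ := mem_filter.1 hz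
    obtain ⟨hzS', hza'⟩ := mem_filter.1 hz'
    obtain ⟨hx, hy⟩ := mem_product.1 hzS
    obtain ⟨hx', hy'⟩ := mem_product.1 hzS'
    obtain ⟨⟨⟨hx₁, -⟩, ⟨hx₂, -⟩, -⟩, -⟩ := mem_solutionBox.1 hx
    obtain ⟨⟨⟨hy₁, -⟩, ⟨hy₂, -⟩, -⟩, -⟩ := mem_solutionBox.1 hy
    obtain ⟨⟨⟨hx₁', -⟩, ⟨hx₂', -⟩, -⟩, -⟩ := mem_solutionBox.1 hx'
    obtain ⟨⟨⟨hy₁', -⟩, ⟨hy₂', -⟩, -⟩, -⟩ := mem_solutionBox.1 hy'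
    obtain ⟨hadd₁, hadd₂⟩ := Prod.mk.inj hzz'
    obtain ⟨hex₁, hey₁⟩ := eq_and_eq_of_add_eq_of_sq_sub_sq_eq ha₁ (congrArg Prod.fst hza)
      (congrArg Prod.fst hza') (by omega)
    obtain ⟨hex₂, hey₂⟩ := eq_and_eq_of_add_eq_of_sq_sub_sq_eq ha₂ (congrArg Prod.snd hza)
      (congrArg Prod.snd hza') (by omega)
    refine Prod.ext (eq_of_sqPair_eq h₃ hm hx hx' ?_) (eq_of_sqPair_eq h₃ hm hy hy' ?_)
    · rw [sqPair, sqPair, hex₁, hex₂]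
    · rw [sqPair, sqPair, hey₁, hey₂]

theorem card_divisors_mul_card_divisors_le {t : ℝ} (ht : ∀ k < q, (#k.divisors : ℝ) ≤ t)
    {a : ℤ × ℤ} (ha : ‖a‖ < q) :
    (#a.1.natAbs.divisors * #a.2.natAbs.divisors : ℝ) ≤ t ^ 2 := by
  have hdiv : ∀ b : ℤ, ‖b‖ ≤ ‖a‖ → (#b.natAbs.divisors : ℝ) ≤ t := fun b hb => by
    refine ht _ ?_
    rw [← Nat.cast_lt (α := ℝ), Nat.cast_natAbs, Int.cast_abs, ← Int.norm_eq_abs]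
    exact hb.trans_lt ha
  rw [sq]
  exact mul_le_mul (hdiv _ (norm_fst_le a)) (hdiv _ (norm_snd_le a)) (Nat.cast_nonneg _)
    ((Nat.cast_nonneg _).trans (hdiv _ (norm_fst_le a)))

theorem card_offDiag_slice_le (h₁ : IsCoprime β₁ q) (h₂ : IsCoprime β₂ q) (h₃ : IsCoprime β₃ q)
    (hm : m ^ 2 < q) (hv : v ∈ congruenceLattice q β₁ β₂) (hv₀ : v ≠ 0)
    (hmin : ∀ w ∈ congruenceLattice q β₁ β₂, w ≠ 0 → ‖v‖ ≤ ‖w‖) {t : ℝ}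
    (ht : ∀ k < q, (#k.divisors : ℝ) ≤ t) :
    (#{z ∈ (solutionBox q β₁ β₂ β₃ m).offDiag | z.1.2.2 = z.2.2.2} : ℝ) ≤
      t ^ 2 * ((2 * m ^ 2 / ‖v‖ + 1) * (4 * ‖v‖ * m ^ 2 / q + 1)) := by
  have hq : 0 < q := (Nat.zero_le _).trans_lt hm
  set D := {z ∈ (solutionBox q β₁ β₂ β₃ m).offDiag | z.1.2.2 = z.2.2.2}
  have hD : ∀ z ∈ D, z.1 ∈ solutionBox q β₁ β₂ β₃ m ∧ z.2 ∈ solutionBox q β₁ β₂ β₃ m ∧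
      z.1 ≠ z.2 ∧ z.1.2.2 = z.2.2.2 := fun z hz => by
    simpa only [D, mem_filter, mem_offDiag, and_assoc] using hz
  have hnorm : ∀ z ∈ D, ‖sqPair z.1 - sqPair z.2‖ ≤ (m : ℝ) ^ 2 := fun z hz =>
    norm_sqPair_sub_le (hD z hz).1 (hD z hz).2.1
  have hmem : ∀ z ∈ D, sqPair z.1 - sqPair z.2 ∈ congruenceLattice q β₁ β₂ := fun z hz =>
    sqPair_sub_mem_congruenceLattice (hD z hz).1 (hD z hz).2.1 (hD z hz).2.2.2
  have hfiber : ∀ a ∈ D.image (fun z => sqPair z.1 - sqPair z.2),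
      (#{z ∈ D | sqPair z.1 - sqPair z.2 = a} : ℝ) ≤ t ^ 2 := by
    rw [forall_mem_image]
    intro z hz
    have hlt : ‖sqPair z.1 - sqPair z.2‖ < q := (hnorm z hz).trans_lt (mod_cast hm)
    have hne : sqPair z.1 - sqPair z.2 ≠ 0 := fun h₀ =>
      (hD z hz).2.2.1 (eq_of_sqPair_eq h₃ hm (hD z hz).1 (hD z hz).2.1 (sub_eq_zero.1 h₀))
    obtain ⟨ha₁, ha₂⟩ := ne_zero_of_mem_congruenceLattice h₁ h₂ (hmem z hz) hne hlt
    refine le_trans ?_ (card_divisors_mul_card_divisors_le ht hlt)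
    rw [← Nat.cast_mul, Nat.cast_le]
    refine le_trans (card_le_card (filter_subset_filter _ fun z hz => ?_))
      (card_sqPair_sub_eq_le (β₁ := β₁) (β₂ := β₂) h₃ hm ha₁ ha₂)
    exact mem_product.2 ⟨(hD z hz).1, (hD z hz).2.1⟩
  refine (cast_card_le_mul_card_of_mapsTo (fun z hz => mem_image_of_mem _ hz) hfiber).trans
    (mul_le_mul_of_nonneg_left ?_ (sq_nonneg t))
  refine card_lattice_le hq hv₀ hmin (fun w hw => dvd_cross_of_mem_congruenceLattice h₁ hv hw)
    (by positivity) ?_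
  rw [forall_mem_image]
  exact fun z hz => ⟨hnorm z hz, hmem z hz⟩

theorem card_solutionBox_sq_le (h₁ : IsCoprime β₁ q) (h₂ : IsCoprime β₂ q) (h₃ : IsCoprime β₃ q)
    (hm : m ^ 2 < q) (hv : v ∈ congruenceLattice q β₁ β₂) (hv₀ : v ≠ 0)
    (hmin : ∀ w ∈ congruenceLattice q β₁ β₂, w ≠ 0 → ‖v‖ ≤ ‖w‖) {t : ℝ}
    (ht : ∀ k < q, (#k.divisors : ℝ) ≤ t) :
    (#(solutionBox q β₁ β₂ β₃ m) : ℝ) ^ 2 ≤ (m + 1) * (#(solutionBox q β₁ β₂ β₃ m) +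
      t ^ 2 * ((2 * m ^ 2 / ‖v‖ + 1) * (4 * ‖v‖ * m ^ 2 / q + 1))) := by
  have hIcc : (#(Icc 0 (m : ℤ)) : ℝ) = m + 1 := by simp
  have hcs := card_sq_le_card_mul_card_add_offDiag (S := solutionBox q β₁ β₂ β₃ m)
    (f := fun x => x.2.2) fun x hx => snd_snd_mem_Icc_of_mem_solutionBox hx
  rw [← hIcc]
  calc (#(solutionBox q β₁ β₂ β₃ m) : ℝ) ^ 2
      ≤ #(Icc 0 (m : ℤ)) * (#(solutionBox q β₁ β₂ β₃ m) +
        #{z ∈ (solutionBox q β₁ β₂ β₃ m).offDiag | z.1.2.2 = z.2.2.2}) := by exact_mod_cast hcs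
    _ ≤ _ := by
      gcongr
      exact card_offDiag_slice_le h₁ h₂ h₃ hm hv hv₀ hmin ht

theorem exists_shortest_mem_congruenceLattice (hq : 0 < q) (β₁ β₂ : ℤ) :
    ∃ v ∈ congruenceLattice q β₁ β₂, v ≠ 0 ∧ ‖v‖ ^ 2 ≤ (q : ℝ) ∧
      ∀ w ∈ congruenceLattice q β₁ β₂, w ≠ 0 → ‖v‖ ≤ ‖w‖ := by
  obtain ⟨a, ha, ha₀, haq⟩ := exists_norm_sq_le_mem_congruenceLattice hq β₁ β₂
  obtain ⟨v, ⟨hv, hv₀⟩, hmin⟩ :=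
    exists_min_norm (S := {w | w ∈ congruenceLattice q β₁ β₂ ∧ w ≠ 0}) ⟨a, ha, ha₀⟩
  refine ⟨v, hv, hv₀, ?_, fun w hw hw₀ => hmin w ⟨hw, hw₀⟩⟩
  exact (pow_le_pow_left₀ (norm_nonneg v) (hmin a ⟨ha, ha₀⟩) 2).trans haq

end SolutionBox

theorem binaryFormBox_subset {A B w : ℤ} {R R' : ℕ} (h : R ≤ R') :
    binaryFormBox A B w R ⊆ binaryFormBox A B w R' := fun a ha => by
  simp only [mem_binaryFormBox] at ha ⊢
  omega

theorem le_add_sqrt_of_sq_le_mul_add {a b x : ℝ} (ha : 0 ≤ a) (hb : 0 ≤ b)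
    (h : x ^ 2 ≤ a * (x + b)) : x ≤ a + √(a * b) := by
  have hab : 0 ≤ a * b := mul_nonneg ha hb
  by_contra! hlt
  nlinarith [Real.sq_sqrt hab, Real.sqrt_nonneg (a * b)]

theorem rpow_five_halves_div_eq {m q : ℝ} (hm : 0 ≤ m) :
    m ^ (5 / 2 : ℝ) / q ^ (1 / 2 : ℝ) = √(m ^ 5 / q) := by
  rw [Real.sqrt_div (by positivity), Real.sqrt_eq_rpow, Real.sqrt_eq_rpow,
    ← Real.rpow_natCast_mul hm]
  norm_num

theorem sqrt_mul_lattice_bound_le {m q ℓ t : ℝ} (hm : 1 ≤ m) (hq : 0 < q) (hℓ : 0 < ℓ)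
    (hℓq : ℓ ^ 2 ≤ q) (hlarge : q ≤ ℓ * m ^ 2) (ht : 0 ≤ t) :
    √((m + 1) * (t ^ 2 * ((2 * m ^ 2 / ℓ + 1) * (4 * ℓ * m ^ 2 / q + 1)))) ≤
      6 * t * √(m ^ 5 / q) := by
  have hℓm : ℓ ≤ m ^ 2 := le_of_mul_le_mul_left (by nlinarith) hℓ
  have hfirst : 2 * m ^ 2 / ℓ + 1 ≤ 3 * m ^ 2 / ℓ := by
    rw [div_add_one hℓ.ne']
    gcongr
    linarith
  have hsecond : 4 * ℓ * m ^ 2 / q + 1 ≤ 5 * ℓ * m ^ 2 / q := by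
    rw [div_add_one hq.ne']
    gcongr
    linarith
  calc √((m + 1) * (t ^ 2 * ((2 * m ^ 2 / ℓ + 1) * (4 * ℓ * m ^ 2 / q + 1))))
      ≤ √((m + m) * (t ^ 2 * (3 * m ^ 2 / ℓ * (5 * ℓ * m ^ 2 / q)))) := by gcongr
    _ = √(30 * t ^ 2 * (m ^ 5 / q)) := by
      congr 1
      field_simp
      ring
    _ ≤ √((6 * t) ^ 2 * (m ^ 5 / q)) := by
      gcongr
      nlinarith [sq_nonneg t]
    _ = 6 * t * √(m ^ 5 / q) := by rw [Real.sqrt_mul (sq_nonneg _), Real.sqrt_sq (by positivity)]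

theorem card_solutionBox_le_of_norm_mul_le {q : ℕ} {β₁ β₂ β₃ : ℤ} {m : ℕ} {v : ℤ × ℤ}
    (h₁ : IsCoprime β₁ q) (h₂ : IsCoprime β₂ q) (h₃ : IsCoprime β₃ q) (hm₀ : 1 ≤ m)
    (hm : m ^ 2 < q) (hv : v ∈ congruenceLattice q β₁ β₂) (hv₀ : v ≠ 0) (hvq : ‖v‖ ^ 2 ≤ q)
    {F : ℝ} (hF : ∀ A B w : ℤ, A ≠ 0 → B ≠ 0 → w ≠ 0 → |A| ≤ q → |B| ≤ q →
      (#(binaryFormBox A B w q) : ℝ) ≤ F) (hsmall : ‖v‖ * m ^ 2 ≤ q) :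
    (#(solutionBox q β₁ β₂ β₃ m) : ℝ) ≤ (5 * F + 1) * (m + 1) := by
  have hq : 1 < q := (Nat.one_le_pow 2 m hm₀).trans_lt hm
  have hvlt : ‖v‖ < q := lt_of_pow_lt_pow_left₀ 2 (by positivity)
    (hvq.trans_lt (mod_cast lt_self_pow₀ hq one_lt_two))
  have habs : ∀ b : ℤ, ‖b‖ ≤ ‖v‖ → |b| ≤ q := fun b hb => by
    rw [Int.norm_eq_abs] at hb
    exact_mod_cast hb.trans hvlt.le
  obtain ⟨hv₁, hv₂⟩ := ne_zero_of_mem_congruenceLattice h₁ h₂ hv hv₀ hvlt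
  have hFm : ∀ w ≠ 0, (#(binaryFormBox v.1 v.2 w m) : ℝ) ≤ F := fun w hw =>
    le_trans (mod_cast card_le_card (binaryFormBox_subset (by nlinarith)))
      (hF v.1 v.2 w hv₁ hv₂ hw (habs _ (norm_fst_le v)) (habs _ (norm_snd_le v)))
  have hF₀ : 0 ≤ F := (Nat.cast_nonneg _).trans (hFm 1 one_ne_zero)
  have hratio : 4 * ‖v‖ * m ^ 2 / q ≤ 4 := div_le_of_le_mul₀ (by positivity) (by positivity)
    (by linarith)
  exact (card_solutionBox_le_of_card_binaryFormBox_le h₁ h₃ hm hv hv₁ hFm).trans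
    (mul_le_mul_of_nonneg_right (by nlinarith) (by positivity))

theorem card_solutionBox_le_of_le_norm_mul {q : ℕ} {β₁ β₂ β₃ : ℤ} {m : ℕ} {v : ℤ × ℤ}
    (h₁ : IsCoprime β₁ q) (h₂ : IsCoprime β₂ q) (h₃ : IsCoprime β₃ q) (hm₀ : 1 ≤ m)
    (hm : m ^ 2 < q) (hv : v ∈ congruenceLattice q β₁ β₂) (hv₀ : v ≠ 0) (hvq : ‖v‖ ^ 2 ≤ q)
    (hmin : ∀ w ∈ congruenceLattice q β₁ β₂, w ≠ 0 → ‖v‖ ≤ ‖w‖) {t : ℝ}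
    (ht : ∀ k < q, (#k.divisors : ℝ) ≤ t) (hlarge : q ≤ ‖v‖ * m ^ 2) :
    (#(solutionBox q β₁ β₂ β₃ m) : ℝ) ≤ m + 1 + 6 * t * √(m ^ 5 / q) := by
  have hq : 0 < q := (Nat.zero_le _).trans_lt hm
  have ht₀ : 0 ≤ t := (Nat.cast_nonneg _).trans (ht 0 hq)
  refine (le_add_sqrt_of_sq_le_mul_add (by positivity) (by positivity)
    (card_solutionBox_sq_le h₁ h₂ h₃ hm hv hv₀ hmin ht)).trans ?_
  gcongr
  exact sqrt_mul_lattice_bound_le (mod_cast hm₀) (by positivity) (norm_pos_iff.2 hv₀) hvq hlarge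
    ht₀

theorem exists_card_solutionBox_le {ε : ℝ} (hε : 0 < ε) :
    ∃ C : ℝ, 0 < C ∧ ∀ (q : ℕ) (β₁ β₂ β₃ : ℤ), IsCoprime β₁ q → IsCoprime β₂ q →
      IsCoprime β₃ q → ∀ m : ℕ, 1 ≤ m → m ^ 2 < q →
        (#(solutionBox q β₁ β₂ β₃ m) : ℝ) ≤
          C * ((m : ℝ) ^ (5 / 2 : ℝ) / (q : ℝ) ^ (1 / 2 : ℝ) + m) * (q : ℝ) ^ ε := by
  obtain ⟨C₁, hC₁, hform⟩ := exists_card_binaryFormBox_le hε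
  obtain ⟨C₂, hC₂, hdivisors⟩ := exists_card_divisors_le_mul_rpow hε
  refine ⟨10 * C₁ + 6 * C₂ + 2, by positivity, fun q β₁ β₂ β₃ h₁ h₂ h₃ m hm hmq => ?_⟩
  have hq : 1 < q := (Nat.one_le_pow 2 m hm).trans_lt hmq
  have hm' : (1 : ℝ) ≤ m := mod_cast hm
  have hqε : 1 ≤ (q : ℝ) ^ ε := Real.one_le_rpow (mod_cast hq.le) hε.le
  obtain ⟨v, hv, hv₀, hvq, hmin⟩ := exists_shortest_mem_congruenceLattice hq.le β₁ β₂
  rw [rpow_five_halves_div_eq (Nat.cast_nonneg m)]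
  have hs := Real.sqrt_nonneg ((m : ℝ) ^ 5 / q)
  rcases le_total (‖v‖ * m ^ 2) q with hsmall | hlarge
  · calc (#(solutionBox q β₁ β₂ β₃ m) : ℝ)
        ≤ (5 * (C₁ * (q : ℝ) ^ ε) + 1) * (m + 1) :=
          card_solutionBox_le_of_norm_mul_le h₁ h₂ h₃ hm hmq hv hv₀ hvq (hform q) hsmall
      _ ≤ (5 * (C₁ * (q : ℝ) ^ ε) + (q : ℝ) ^ ε) * (m + m) := by gcongr
      _ = (10 * C₁ + 2) * m * (q : ℝ) ^ ε := by ring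
      _ ≤ (10 * C₁ + 6 * C₂ + 2) * (√(m ^ 5 / q) + m) * (q : ℝ) ^ ε := by
        gcongr <;> linarith
  · have ht : ∀ k < q, (#k.divisors : ℝ) ≤ C₂ * (q : ℝ) ^ ε := fun k hk =>
      (hdivisors k).trans (by gcongr)
    calc (#(solutionBox q β₁ β₂ β₃ m) : ℝ)
        ≤ m + 1 + 6 * (C₂ * (q : ℝ) ^ ε) * √(m ^ 5 / q) :=
          card_solutionBox_le_of_le_norm_mul h₁ h₂ h₃ hm hmq hv hv₀ hvq hmin ht hlarge
      _ ≤ (m + m) * (q : ℝ) ^ ε + 6 * (C₂ * (q : ℝ) ^ ε) * √(m ^ 5 / q) := by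
        gcongr
        exact (add_le_add_right hm' _).trans (le_mul_of_one_le_right (by positivity) hqε)
      _ ≤ (10 * C₁ + 6 * C₂ + 2) * (√(m ^ 5 / q) + m) * (q : ℝ) ^ ε := by
        have hterms : 0 ≤ ((10 * C₁ + 6 * C₂) * m + (10 * C₁ + 2) * √(m ^ 5 / q)) *
          (q : ℝ) ^ ε := by positivity
        linarith

/-! ### Signed solutions -/

/-- The solutions of `β₁ x₁² + β₂ x₂² + β₃ x₃² ≡ 0 (mod q)` with `|x₁|, |x₂|, |x₃| ≤ M`, with no
condition on the divisors of `x₁ x₂ x₃`. -/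
def solutionSet (q : ℕ) (β₁ β₂ β₃ : ℤ) (M : ℝ) : Set (ℤ × ℤ × ℤ) :=
  {x | ((|x.1| : ℤ) : ℝ) ≤ M ∧ ((|x.2.1| : ℤ) : ℝ) ≤ M ∧ ((|x.2.2| : ℤ) : ℝ) ≤ M ∧
    (q : ℤ) ∣ β₁ * x.1 ^ 2 + β₂ * x.2.1 ^ 2 + β₃ * x.2.2 ^ 2}

theorem exists_sign_mul_abs_eq (x : ℤ) : ∃ s ∈ ({-1, 1} : Finset ℤ), s * |x| = x := by
  rcases abs_choice x with h | h
  · exact ⟨1, by simp, by rw [h, one_mul]⟩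
  · exact ⟨-1, by simp, by rw [h, neg_one_mul, neg_neg]⟩

section SolutionSet

variable {q : ℕ} {β₁ β₂ β₃ : ℤ} {M : ℝ}

theorem solutionSet_subset (q : ℕ) (β₁ β₂ β₃ : ℤ) (M : ℝ) :
    solutionSet q β₁ β₂ β₃ M ⊆
      (({-1, 1} ×ˢ {-1, 1} ×ˢ {-1, 1}) ×ˢ solutionBox q β₁ β₂ β₃ ⌊M⌋₊).image
        fun z : (ℤ × ℤ × ℤ) × ℤ × ℤ × ℤ => z.1 * z.2 := by
  rintro ⟨x₁, x₂, x₃⟩ ⟨hx₁, hx₂, hx₃, hdvd⟩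
  have hfloor : ∀ {k : ℤ}, ((|k| : ℤ) : ℝ) ≤ M → |k| ≤ (⌊M⌋₊ : ℤ) := fun {k} hk => by
    rw [← Int.floor_toNat]
    exact (Int.le_floor.2 hk).trans (Int.self_le_toNat _)
  obtain ⟨s₁, hs₁, h₁⟩ := exists_sign_mul_abs_eq x₁
  obtain ⟨s₂, hs₂, h₂⟩ := exists_sign_mul_abs_eq x₂
  obtain ⟨s₃, hs₃, h₃⟩ := exists_sign_mul_abs_eq x₃
  refine mem_coe.2 (mem_image.2 ⟨((s₁, s₂, s₃), (|x₁|, |x₂|, |x₃|)), mem_product.2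
    ⟨mem_product.2 ⟨hs₁, mem_product.2 ⟨hs₂, hs₃⟩⟩, mem_solutionBox.2 ⟨⟨⟨abs_nonneg _, hfloor hx₁⟩,
      ⟨abs_nonneg _, hfloor hx₂⟩, abs_nonneg _, hfloor hx₃⟩, ?_⟩⟩, ?_⟩)
  · simpa only [sq_abs] using hdvd
  · simp only [Prod.mk_mul_mk, h₁, h₂, h₃]

theorem finite_solutionSet : (solutionSet q β₁ β₂ β₃ M).Finite :=
  (finite_toSet _).subset (solutionSet_subset q β₁ β₂ β₃ M)

theorem ncard_solutionSet_le :
    (solutionSet q β₁ β₂ β₃ M).ncard ≤ 8 * #(solutionBox q β₁ β₂ β₃ ⌊M⌋₊) := by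
  refine (Set.ncard_le_ncard (solutionSet_subset q β₁ β₂ β₃ M) (finite_toSet _)).trans ?_
  rw [Set.ncard_coe_finset]
  refine card_image_le.trans_eq ?_
  rw [card_product]
  rfl

end SolutionSet

theorem sigma_bound_final_general {ε : ℝ} (hε : 0 < ε) :
    ∃ C : ℝ, 0 < C ∧ ∀ (q : ℕ) (β₁ β₂ β₃ : ℤ), IsCoprime β₁ q → IsCoprime β₂ q →
      IsCoprime β₃ q → ∀ M : ℝ, 1 ≤ M → M ^ 2 < q →
        ((solutionSet q β₁ β₂ β₃ M).ncard : ℝ) ≤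
          C * (M ^ (5 / 2 : ℝ) / (q : ℝ) ^ (1 / 2 : ℝ) + M) * (q : ℝ) ^ ε := by
  obtain ⟨C, hC, hbox⟩ := exists_card_solutionBox_le hε
  refine ⟨8 * C, by positivity, fun q β₁ β₂ β₃ h₁ h₂ h₃ M hM hMq => ?_⟩
  have hfloor : (⌊M⌋₊ : ℝ) ≤ M := Nat.floor_le (by linarith)
  have hfloor_sq : ⌊M⌋₊ ^ 2 < q := by
    exact_mod_cast (pow_le_pow_left₀ (Nat.cast_nonneg _) hfloor 2).trans_lt hMq
  calc ((solutionSet q β₁ β₂ β₃ M).ncard : ℝ)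
      ≤ 8 * #(solutionBox q β₁ β₂ β₃ ⌊M⌋₊) := mod_cast ncard_solutionSet_le
    _ ≤ 8 * (C * ((⌊M⌋₊ : ℝ) ^ (5 / 2 : ℝ) / (q : ℝ) ^ (1 / 2 : ℝ) + ⌊M⌋₊) * (q : ℝ) ^ ε) := by
      gcongr
      exact hbox q β₁ β₂ β₃ h₁ h₂ h₃ ⌊M⌋₊ (Nat.floor_pos.2 hM) hfloor_sq
    _ ≤ 8 * (C * (M ^ (5 / 2 : ℝ) / (q : ℝ) ^ (1 / 2 : ℝ) + M) * (q : ℝ) ^ ε) := by gcongr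
    _ = 8 * C * (M ^ (5 / 2 : ℝ) / (q : ℝ) ^ (1 / 2 : ℝ) + M) * (q : ℝ) ^ ε := by ring

theorem sigmaCount_le_ncard_solutionSet (p : ℕ) (β₁ β₂ β₃ : ℤ) (M : ℝ) (q : ℕ) :
    sigmaCount p β₁ β₂ β₃ M q ≤ (solutionSet q β₁ β₂ β₃ M).ncard :=
  Set.ncard_le_ncard (fun _ ⟨hx₁, hx₂, hx₃, _, hdvd⟩ => ⟨hx₁, hx₂, hx₃, hdvd⟩) finite_solutionSet

theorem sq_lt_of_le_rpow_half_sub {M q ε : ℝ} (hq : 1 < q) (hε : 0 < ε) (hM : 0 ≤ M)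
    (h : M ≤ q ^ ((1 : ℝ) / 2 - ε)) : M ^ 2 < q := by
  have hq₀ : 0 < q := zero_lt_one.trans hq
  calc M ^ 2 ≤ (q ^ ((1 : ℝ) / 2 - ε)) ^ 2 := by gcongr
    _ = q ^ (1 - 2 * ε) := by
      rw [← Real.rpow_mul_natCast hq₀.le]
      ring_nf
    _ < q ^ (1 : ℝ) := Real.rpow_lt_rpow_of_exponent_lt hq (by linarith)
    _ = q := Real.rpow_one q

theorem isCoprime_natCast_pow_of_not_dvd {p : ℕ} (hp : p.Prime) {β : ℤ} (h : ¬ (p : ℤ) ∣ β)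
    (n : ℕ) : IsCoprime β (p ^ n : ℕ) := by
  rw [Nat.cast_pow]
  exact ((Nat.prime_iff_prime_int.1 hp).coprime_iff_not_dvd.2 h).symm.pow_right

/-- Uniformly in the odd prime power modulus `q = pⁿ` and the coefficients
coprime to `p`: if `1 ≤ M ≤ q^{1/2-ε}` then
`Σ_{β₁,β₂,β₃}(M,q) ≪_ε (M^{5/2}q^{-1/2} + M^{9/5}q^{-1/5} + M)·q^ε`. -/
theorem sigma_bound_final (ε : ℝ) (hε : 0 < ε) :
    ∃ Cε : ℝ, 0 < Cε ∧
      ∀ (p : ℕ), p.Prime → Odd p → ∀ (n : ℕ), 1 ≤ n → ∀ (β₁ β₂ β₃ : ℤ),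
        ¬ (p : ℤ) ∣ β₁ → ¬ (p : ℤ) ∣ β₂ → ¬ (p : ℤ) ∣ β₃ →
        ∀ M : ℝ, 1 ≤ M → M ≤ ((p : ℝ) ^ n) ^ ((1 : ℝ) / 2 - ε) →
          (sigmaCount p β₁ β₂ β₃ M (p ^ n) : ℝ) ≤
            Cε * (M ^ ((5 : ℝ) / 2) / ((p : ℝ) ^ n) ^ ((1 : ℝ) / 2) +
              M ^ ((9 : ℝ) / 5) / ((p : ℝ) ^ n) ^ ((1 : ℝ) / 5) + M) *
              ((p : ℝ) ^ n) ^ ε := by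
  obtain ⟨C, hC, hbound⟩ := sigma_bound_final_general hε
  refine ⟨C, hC, fun p hp _ n hn β₁ β₂ β₃ h₁ h₂ h₃ M hM hMq => ?_⟩
  have hq : (1 : ℝ) < (p : ℝ) ^ n := one_lt_pow₀ (mod_cast hp.one_lt) (by omega)
  have hMq' : M ^ 2 < (p ^ n : ℕ) := by
    rw [Nat.cast_pow]
    exact sq_lt_of_le_rpow_half_sub hq hε (by linarith) hMq
  calc (sigmaCount p β₁ β₂ β₃ M (p ^ n) : ℝ)
      ≤ (solutionSet (p ^ n) β₁ β₂ β₃ M).ncard :=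
        mod_cast sigmaCount_le_ncard_solutionSet p β₁ β₂ β₃ M (p ^ n)
    _ ≤ C * (M ^ ((5 : ℝ) / 2) / ((p : ℝ) ^ n) ^ ((1 : ℝ) / 2) + M) * ((p : ℝ) ^ n) ^ ε := by
      rw [← Nat.cast_pow]
      exact hbound (p ^ n) β₁ β₂ β₃ (isCoprime_natCast_pow_of_not_dvd hp h₁ n)
        (isCoprime_natCast_pow_of_not_dvd hp h₂ n) (isCoprime_natCast_pow_of_not_dvd hp h₃ n)
        M hM hMq'
    _ ≤ _ := by
      gcongr
      exact le_add_of_nonneg_right (by positivity)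
end
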